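/- Let X be a real-valued random variable with unbounded distribution F and Y a nonnegative random variable with distribution G, neither degenerate at zero, and let H be the distribution of XY. Suppose (X,Y) follows a Sarmanov distribution with kernels φ₁, φ₂ and parameter θ, satisfies Assumption 2 (Ḡ(bx)=o(H̄(x)) for every b>0), and there exist constants c>0, d₁∈(0,∞) and a measurable function ψ such that ψ(y)=lim_{δ→0+} (∫_{y−δ}^{y+δ} φ₂(v) G(dv))/(G(y+δ)−G(y−δ)) for all y in the support of Y, φ₁(x)→d₁ as x→∞, and P(1+θd₁ψ(Y)≥c)=1. If F belongs to the class S(γ) for some γ≥0, then H belongs to S(γ/β_G), where β_G=sup{y:G(y)<1} and γ/β_G is understood as 0 when β_G=∞. -/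

import Mathlib

open MeasureTheory ProbabilityTheory Filter Set Asymptotics

noncomputable section

/-- The tail (survival) function `x ↦ P(Z > x)` of a random variable `Z`. -/
def rvTail {Ω : Type*} [MeasureSpace Ω] (Z : Ω → ℝ) (x : ℝ) : ℝ :=
  (ℙ {ω | x < Z ω}).toReal

/-- The cumulative distribution function `x ↦ P(Z ≤ x)` of a random variable `Z`. -/
def rvCdf {Ω : Type*} [MeasureSpace Ω] (Z : Ω → ℝ) (x : ℝ) : ℝ :=
  (ℙ {ω | Z ω ≤ x}).toReal

/-- The left limit of the cdf, `G(y-) = P(Z < y)`. -/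
def rvCdfLeft {Ω : Type*} [MeasureSpace Ω] (Z : Ω → ℝ) (y : ℝ) : ℝ :=
  (ℙ {ω | Z ω < y}).toReal

/-- The distribution of `Z` is unbounded (above): its tail is positive for every `x > 0`. -/
def UnboundedDist {Ω : Type*} [MeasureSpace Ω] (Z : Ω → ℝ) : Prop :=
  ∀ x > 0, 0 < rvTail Z x

/-- The support `D_Z = {y : P(Z ∈ (y - δ, y + δ)) > 0 for all δ > 0}` of the
distribution of `Z`. -/
def distSupport {Ω : Type*} [MeasureSpace Ω] (Z : Ω → ℝ) : Set ℝ :=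
  {y | ∀ δ > 0, 0 < ℙ {ω | Z ω ∈ Ioo (y - δ) (y + δ)}}

/-- The distribution of `Z` belongs to the class `L(γ)`: it is unbounded above and
`P(Z > x - t) ~ e^{γ t} P(Z > x)` as `x → ∞`, for every `t > 0`. -/
def MemLGamma {Ω : Type*} [MeasureSpace Ω] (Z : Ω → ℝ) (γ : ℝ) : Prop :=
  UnboundedDist Z ∧
    ∀ t > 0, (fun x => rvTail Z (x - t)) ~[atTop] (fun x => Real.exp (γ * t) * rvTail Z x)

/-- The tail of the two-fold convolution of the distribution of `Z` with itself. -/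
def convSqTail {Ω : Type*} [MeasureSpace Ω] (Z : Ω → ℝ) (x : ℝ) : ℝ :=
  (((Measure.map Z ℙ).conv (Measure.map Z ℙ)) (Ioi x)).toReal

/-- The distribution of `Z` belongs to the class `S(γ)`: it belongs to `L(γ)`, the
exponential moment `c = ∫ e^{γ y} dV(y)` is finite, and the tail of the two-fold
convolution satisfies `V̄*²(x) ~ 2 c V̄(x)` as `x → ∞`. -/
def MemSGamma {Ω : Type*} [MeasureSpace Ω] (Z : Ω → ℝ) (γ : ℝ) : Prop :=
  MemLGamma Z γ ∧
    Integrable (fun y => Real.exp (γ * y)) (Measure.map Z ℙ) ∧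
    (fun x => convSqTail Z x) ~[atTop]
      (fun x => 2 * (∫ y, Real.exp (γ * y) ∂(Measure.map Z ℙ)) * rvTail Z x)

open Classical in
/-- `γ / β_G`, where `β_G = sup {y : G(y) < 1}` is the right endpoint of the distribution
of `Z`, with the convention that `γ / β_G = 0` when `β_G = ∞`.
(Note that `G(y) < 1 ↔ P(Z > y) > 0`.) -/
def gammaOverBeta {Ω : Type*} [MeasureSpace Ω] (Z : Ω → ℝ) (γ : ℝ) : ℝ :=
  if BddAbove {y : ℝ | 0 < rvTail Z y} then γ / sSup {y : ℝ | 0 < rvTail Z y} else 0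

/-- Assumption 2: `Ḡ(b x) = o(H̄(x))` as `x → ∞` for every constant `b > 0`, where `G` is
the distribution of `Y` and `H` is the distribution of the product `X Y`. -/
def Assumption2 {Ω : Type*} [MeasureSpace Ω] (X Y : Ω → ℝ) : Prop :=
  ∀ b > 0, (fun x => rvTail Y (b * x)) =o[atTop] fun x => rvTail (fun ω => X ω * Y ω) x

/-- Assumption 1: `K x y` is the conditional probability `P(X > x | Y = y)`, namely for
`y` in the support of `Y` it is the limit of `P(X > x | Y ∈ (y - δ, y + δ])` as `δ → 0+`,
and for `y` outside the support it is the unconditional probability `P(X > x)` (and then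
`h y = 1`); `h : [0,∞) → (0,∞)` is a measurable function such that
`P(X > x | Y = y) ~ h(y) P(X > x)` as `x → ∞`, uniformly for `y ≥ 0`. -/
def Assumption1 {Ω : Type*} [MeasureSpace Ω] (X Y : Ω → ℝ) (h : ℝ → ℝ) (K : ℝ → ℝ → ℝ) :
    Prop :=
  Measurable h ∧ (∀ y, 0 ≤ y → 0 < h y) ∧
    (∀ y, y ∉ distSupport Y → h y = 1 ∧ ∀ x, K x y = rvTail X x) ∧
    (∀ y ∈ distSupport Y, ∀ x : ℝ,
      Tendsto
        (fun δ : ℝ => (ℙ {ω | x < X ω ∧ Y ω ∈ Ioc (y - δ) (y + δ)}).toReal /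
          (ℙ {ω | Y ω ∈ Ioc (y - δ) (y + δ)}).toReal)
        (nhdsWithin 0 (Ioi 0)) (nhds (K x y))) ∧
    ∀ ε > 0, ∀ᶠ x in atTop, ∀ y, 0 ≤ y → |K x y / (h y * rvTail X x) - 1| < ε

/-- `(X, Y)` follows a Farlie–Gumbel–Morgenstern (FGM) distribution with parameter
`θ ∈ [-1, 1]`: `P(X > x, Y > y) = F̄(x) Ḡ(y) (1 + θ F(x) G(y))` for all `x` in the
support of `X` and `y` in the support of `Y`. -/
def FGM {Ω : Type*} [MeasureSpace Ω] (X Y : Ω → ℝ) (θ : ℝ) : Prop :=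
  θ ∈ Icc (-1 : ℝ) 1 ∧
    ∀ x ∈ distSupport X, ∀ y ∈ distSupport Y,
      (ℙ {ω | x < X ω ∧ y < Y ω}).toReal =
        rvTail X x * rvTail Y y * (1 + θ * rvCdf X x * rvCdf Y y)

/-- `(X, Y)` follows a bivariate Sarmanov distribution with kernels `φ₁, φ₂` and
parameter `θ`: the joint law has density `1 + θ φ₁(x) φ₂(y)` with respect to the product
of the marginal laws, where `φ₁, φ₂` are measurable, `E φ₁(X) = E φ₂(Y) = 0` and
`1 + θ φ₁(x) φ₂(y) ≥ 0`. -/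
def Sarmanov {Ω : Type*} [MeasureSpace Ω] (X Y : Ω → ℝ) (φ₁ φ₂ : ℝ → ℝ) (θ : ℝ) : Prop :=
  Measurable φ₁ ∧ Measurable φ₂ ∧
    Integrable (fun ω => φ₁ (X ω)) ℙ ∧ Integrable (fun ω => φ₂ (Y ω)) ℙ ∧
    (∫ ω, φ₁ (X ω)) = 0 ∧ (∫ ω, φ₂ (Y ω)) = 0 ∧
    (∀ x y : ℝ, 0 ≤ y → 0 ≤ 1 + θ * φ₁ x * φ₂ y) ∧
    Measure.map (fun ω => (X ω, Y ω)) ℙ =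
      ((Measure.map X ℙ).prod (Measure.map Y ℙ)).withDensity
        (fun p => ENNReal.ofReal (1 + θ * φ₁ p.1 * φ₂ p.2))

/-- The condition `ψ(y) = lim_{δ → 0+} (∫_{y-δ}^{y+δ} φ₂(v) G(dv)) / (G(y+δ) - G(y-δ))`
for all `y` in the support of `Y`. -/
def SarmanovPsi {Ω : Type*} [MeasureSpace Ω] (Y : Ω → ℝ) (φ₂ ψ : ℝ → ℝ) : Prop :=
  ∀ y ∈ distSupport Y,
    Tendsto
      (fun δ : ℝ => (∫ v in Ioc (y - δ) (y + δ), φ₂ v ∂(Measure.map Y ℙ)) /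
        (rvCdf Y (y + δ) - rvCdf Y (y - δ)))
      (nhdsWithin 0 (Ioi 0)) (nhds (ψ y))

/-
Since `φ₁(x) → d₁`, above a high level of the first coordinate the joint law of `(X, Y)` is
squeezed between multiples, with factors close to one, of `F ⊗ ν`, where `ν` is `G` tilted by
`1 + θ d₁ ψ`; here `ψ = φ₂` almost everywhere on `G` by Lebesgue differentiation. By Assumption 2
the rest of the plane does not contribute to the tail of `XY`, so `XY` is tail-equivalent to the
product of independent variables with laws `F` and `ν`.

For a law in `L(γ)` with finite exponential moment, membership in `S(γ)` says that, given a sum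
above `x`, both terms exceed `A` only with a probability that vanishes as `A → ∞`, uniformly in
large `x`. This property passes to domination by a constant, hence from `F ⊗ ν` to the joint law,
and is inherited by an independent product by slicing over the two copies of the second factor.
-/

variable {m : Measure ℝ} {γ : ℝ}

section Asymptotics

lemma isEquivalent_const_mul_iff_tendsto_div {α : Type*} {l : Filter α} {f g : α → ℝ} {a : ℝ}
    (ha : a ≠ 0) (hg : ∀ x, g x ≠ 0) :
    (f ~[l] fun x => a * g x) ↔ Tendsto (fun x => f x / g x) l (nhds a) := by
  rw [isEquivalent_iff_tendsto_one (.of_forall fun x => mul_ne_zero ha (hg x))]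
  refine ⟨fun h => ?_, fun h => ?_⟩
  · refine ((mul_one a) ▸ h.const_mul a).congr fun x => ?_
    simp only [Pi.div_apply]
    field_simp [hg x]
  · refine ((div_self ha) ▸ h.div_const a).congr fun x => ?_
    simp only [Pi.div_apply]
    field_simp [hg x]

lemma isEquivalent_const_mul_iff_eventually_le {α : Type*} {l : Filter α} {f g : α → ℝ} {a : ℝ}
    (ha : a ≠ 0) (hg : ∀ x, 0 < g x) :
    (f ~[l] fun x => a * g x) ↔
      (∀ b > a, ∀ᶠ x in l, f x ≤ b * g x) ∧ ∀ b < a, ∀ᶠ x in l, b * g x ≤ f x := by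
  rw [isEquivalent_const_mul_iff_tendsto_div ha fun x => (hg x).ne', tendsto_order, and_comm]
  refine and_congr ⟨fun h b hb => ?_, fun h b hb => ?_⟩ ⟨fun h b hb => ?_, fun h b hb => ?_⟩
  · filter_upwards [h b hb] with x hx using ((div_lt_iff₀ (hg x)).1 hx).le
  · obtain ⟨b', hab', hb'b⟩ := exists_between hb
    filter_upwards [h b' hab'] with x hx using ((div_le_iff₀ (hg x)).2 hx).trans_lt hb'b
  · filter_upwards [h b hb] with x hx using ((lt_div_iff₀ (hg x)).1 hx).le
  · obtain ⟨b', hbb', hb'a⟩ := exists_between hb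
    filter_upwards [h b' hb'a] with x hx using hbb'.trans_le ((le_div_iff₀ (hg x)).2 hx)

end Asymptotics

section Tail

/-- The tail `x ↦ m((x, ∞))` of a measure on the line. -/
abbrev tail (m : Measure ℝ) (x : ℝ) : ℝ := m.real (Ioi x)

lemma tail_antitone [IsFiniteMeasure m] : Antitone (tail m) :=
  fun _ _ h => measureReal_mono (Ioi_subset_Ioi h)

lemma tail_eq_one_sub_cdf [IsProbabilityMeasure m] (x : ℝ) : tail m x = 1 - cdf m x := by
  rw [cdf_eq_real, tail, ← compl_Iic, probReal_compl_eq_one_sub measurableSet_Iic]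

lemma measureReal_Ioc_eq_cdf_sub [IsProbabilityMeasure m] {a b : ℝ} (hab : a ≤ b) :
    m.real (Ioc a b) = cdf m b - cdf m a := by
  rw [measureReal_def, ← measure_cdf m, StieltjesFunction.measure_Ioc,
    ENNReal.toReal_ofReal (sub_nonneg.2 (monotone_cdf m hab)), measure_cdf]

lemma tendsto_cdf_nhdsGT (m : Measure ℝ) (x : ℝ) :
    Tendsto (cdf m) (nhdsWithin x (Ioi x)) (nhds (cdf m x)) :=
  ((cdf m).right_continuous x).mono_left (nhdsWithin_mono x Ioi_subset_Ici_self)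

lemma exists_gt_tail_pos [IsProbabilityMeasure m] {x : ℝ} (hx : 0 < tail m x) :
    ∃ y > x, 0 < tail m y := by
  simp only [tail_eq_one_sub_cdf, sub_pos] at hx ⊢
  obtain ⟨y, hy, hxy⟩ :=
    (((tendsto_cdf_nhdsGT m x).eventually_lt_const hx).and self_mem_nhdsWithin).exists
  exact ⟨y, hxy, hy⟩

lemma tendsto_measureReal_Ioc_zero [IsProbabilityMeasure m] (x : ℝ) :
    Tendsto (fun y => m.real (Ioc x y)) (nhdsWithin x (Ioi x)) (nhds 0) := by
  refine (sub_self (cdf m x) ▸ (tendsto_cdf_nhdsGT m x).sub_const (cdf m x)).congr' ?_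
  filter_upwards [self_mem_nhdsWithin] with y hy
  exact (measureReal_Ioc_eq_cdf_sub (le_of_lt hy)).symm

end Tail

/-- The class `L(γ)` for a measure on the line, in terms of its tail. -/
structure MemL (m : Measure ℝ) (γ : ℝ) : Prop where
  tail_pos : ∀ x, 0 < tail m x
  isEquivalent : ∀ t > 0,
    (fun x => tail m (x - t)) ~[atTop] fun x => Real.exp (γ * t) * tail m x

namespace MemL

lemma tendsto_div (h : MemL m γ) (t : ℝ) :
    Tendsto (fun x => tail m (x - t) / tail m x) atTop (nhds (Real.exp (γ * t))) := by
  have of_pos {t : ℝ} (ht : 0 < t) :=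
    (isEquivalent_const_mul_iff_tendsto_div (Real.exp_ne_zero (γ * t))
      fun x => (h.tail_pos x).ne').1 (h.isEquivalent t ht)
  rcases lt_trichotomy t 0 with ht | rfl | ht
  · have hinv := ((of_pos (neg_pos.2 ht)).comp (tendsto_atTop_add_const_right _ (-t)
      tendsto_id)).inv₀ (Real.exp_ne_zero _)
    rw [← Real.exp_neg, mul_neg, neg_neg] at hinv
    refine hinv.congr fun x => ?_
    simp [sub_eq_add_neg]
  · simpa using tendsto_const_nhds.congr fun x => (div_self (h.tail_pos x).ne').symm
  · exact of_pos ht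

lemma eventually_le (h : MemL m γ) {t D : ℝ} (hD : Real.exp (γ * t) < D) :
    ∀ᶠ x in atTop, tail m (x - t) ≤ D * tail m x := by
  filter_upwards [(h.tendsto_div t).eventually_lt_const hD] with x hx
  exact ((div_lt_iff₀ (h.tail_pos x)).1 hx).le

lemma exists_forall_ge_le (h : MemL m γ) {t D : ℝ} (hD : Real.exp (γ * t) < D) :
    ∃ z > 0, ∀ u ≥ z, tail m (u - t) ≤ D * tail m u := by
  obtain ⟨z, hz⟩ := eventually_atTop.1 (h.eventually_le hD)
  exact ⟨max z 1, by positivity, fun u hu => hz u ((le_max_left _ _).trans hu)⟩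

lemma of_isEquivalent {m' : Measure ℝ} [IsFiniteMeasure m'] (h : MemL m γ)
    (hequiv : tail m' ~[atTop] tail m) : MemL m' γ where
  tail_pos x := by
    obtain ⟨C, hC⟩ := hequiv.isBigO_symm.bound
    obtain ⟨y, hy, hxy⟩ := (hC.and (eventually_ge_atTop x)).exists
    rw [Real.norm_of_nonneg measureReal_nonneg, Real.norm_of_nonneg measureReal_nonneg] at hy
    have hCy : 0 < C * tail m' y := (h.tail_pos y).trans_le hy
    exact (measureReal_nonneg.lt_of_ne fun h₀ => by simp [← h₀] at hCy).trans_le (tail_antitone hxy)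
  isEquivalent t ht := by
    have hshift : Tendsto (fun x : ℝ => x - t) atTop atTop :=
      tendsto_atTop_add_const_right _ (-t) tendsto_id
    exact ((hequiv.comp_tendsto hshift).trans (h.isEquivalent t ht)).trans
      (IsEquivalent.refl.mul hequiv.symm)

lemma isLittleO_tail_comp [IsFiniteMeasure m] (h : MemL m γ) (hγ : 0 < γ) {α : Type*}
    {l : Filter α} {f g : α → ℝ} (hg : Tendsto g l atTop)
    (hfg : Tendsto (fun x => f x - g x) l atTop) :
    (fun x => tail m (f x)) =o[l] fun x => tail m (g x) := by
  refine IsLittleO.of_bound fun ε hε => ?_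
  obtain ⟨t, ht⟩ : ∃ t, Real.exp (γ * t) < ε :=
    ⟨(Real.log ε - 1) / γ, by
      rw [mul_div_cancel₀ _ hγ.ne', ← Real.lt_log_iff_exp_lt hε]
      linarith⟩
  filter_upwards [hg.eventually (h.eventually_le ht), hfg.eventually_ge_atTop (-t)] with x hx hfgx
  rw [Real.norm_of_nonneg measureReal_nonneg, Real.norm_of_nonneg measureReal_nonneg]
  exact (tail_antitone (by linarith)).trans hx

end MemL

section Slices

variable {α α' β : Type*} [MeasurableSpace α] [MeasurableSpace α'] [MeasurableSpace β]
  {μ : Measure α} {μ' : Measure α'} {ν : Measure β}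
  [IsFiniteMeasure μ] [IsFiniteMeasure μ'] [IsFiniteMeasure ν]

lemma measureReal_le_measureReal_of_ae {s t : Set α} (h : ∀ᵐ a ∂μ, a ∈ s → a ∈ t) :
    μ.real s ≤ μ.real t :=
  ENNReal.toReal_mono (measure_ne_top _ _) (measure_mono_ae h)

lemma measureReal_prod_eq_integral {s : Set (α × β)} (hs : MeasurableSet s) :
    (μ.prod ν).real s = ∫ y, μ.real ((fun a => (a, y)) ⁻¹' s) ∂ν := by
  rw [← integral_indicator_one hs, integral_prod_symm _ ((integrable_const 1).indicator hs)]
  refine integral_congr_ae (ae_of_all _ fun y => ?_)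
  exact integral_indicator_one (measurable_prodMk_right hs)

lemma integrable_measureReal_slice {s : Set (α × β)} (hs : MeasurableSet s) :
    Integrable (fun y => μ.real ((fun a => (a, y)) ⁻¹' s)) ν :=
  .of_bound (measurable_measure_prodMk_right hs).ennreal_toReal.aestronglyMeasurable (μ.real univ)
    (ae_of_all _ fun _ => by
      rw [Real.norm_of_nonneg measureReal_nonneg]
      exact measureReal_mono (subset_univ _))

lemma measureReal_prod_le_mul {s : Set (α × β)} {t : Set (α' × β)} (hs : MeasurableSet s)
    (ht : MeasurableSet t) {C : ℝ}
    (h : ∀ᵐ y ∂ν, μ.real ((fun a => (a, y)) ⁻¹' s) ≤ C * μ'.real ((fun a => (a, y)) ⁻¹' t)) :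
    (μ.prod ν).real s ≤ C * (μ'.prod ν).real t := by
  rw [measureReal_prod_eq_integral hs, measureReal_prod_eq_integral ht, ← integral_const_mul]
  exact integral_mono_ae (integrable_measureReal_slice hs)
    ((integrable_measureReal_slice ht).const_mul C) h

end Slices

/-- The probability that two independent variables with law `m` have sum exceeding `x` while
both of them exceed `A`. -/
def jointExcess (m : Measure ℝ) (A x : ℝ) : ℝ :=
  (m.prod m).real {p | x < p.1 + p.2 ∧ A < p.1 ∧ A < p.2}

/-- The principle of a single big jump: up to a fraction of its probability that vanishes as
`A → ∞`, uniformly in large `x`, a sum of two independent variables exceeds `x` with only one of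
them above the level `A`. -/
def HasSingleBigJump (m : Measure ℝ) : Prop :=
  ∀ ε > 0, ∃ A, ∀ᶠ x in atTop, jointExcess m A x ≤ ε * tail m x

/-- The class `S(γ)` for a measure on the line. -/
structure MemS (m : Measure ℝ) (γ : ℝ) : Prop where
  memL : MemL m γ
  integrable : Integrable (fun y => Real.exp (γ * y)) m
  isEquivalent : tail (m.conv m) ~[atTop] fun x => 2 * (∫ y, Real.exp (γ * y) ∂m) * tail m x

lemma tendsto_setIntegral_Iic {f : ℝ → ℝ} (hf : Integrable f m) :
    Tendsto (fun A => ∫ y in Iic A, f y ∂m) atTop (nhds (∫ y, f y ∂m)) := by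
  simpa using tendsto_setIntegral_of_monotone (s := fun A : ℝ => Iic A)
    (fun _ => measurableSet_Iic) (fun _ _ h => Iic_subset_Iic.2 h) hf.integrableOn

section SingleBigJump

variable [IsProbabilityMeasure m]

lemma jointExcess_antitone (m : Measure ℝ) [IsProbabilityMeasure m] (x : ℝ) :
    Antitone fun A => jointExcess m A x :=
  fun _ _ h => measureReal_mono fun _ ⟨hx, h₁, h₂⟩ => ⟨hx, h.trans_lt h₁, h.trans_lt h₂⟩

lemma HasSingleBigJump.exists_ge (h : HasSingleBigJump m) {ε : ℝ} (hε : 0 < ε) (A₀ : ℝ) :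
    ∃ A ≥ A₀, ∀ᶠ x in atTop, jointExcess m A x ≤ ε * tail m x := by
  obtain ⟨A, hA⟩ := h ε hε
  refine ⟨max A₀ A, le_max_left _ _, ?_⟩
  filter_upwards [hA] with x hx using (jointExcess_antitone m x (le_max_right _ _)).trans hx

lemma tail_conv_eq {A x : ℝ} (hx : 2 * A ≤ x) :
    tail (m.conv m) x =
      2 * (m.prod m).real {p | x < p.1 + p.2 ∧ p.2 ≤ A} + jointExcess m A x := by
  have hswap : (m.prod m).real {p | x < p.1 + p.2 ∧ p.1 ≤ A} =
      (m.prod m).real {p | x < p.1 + p.2 ∧ p.2 ≤ A} := by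
    have hs : MeasurableSet {p : ℝ × ℝ | x < p.1 + p.2 ∧ p.2 ≤ A} := by measurability
    rw [← Measure.measurePreserving_swap.measureReal_preimage hs.nullMeasurableSet]
    simp [preimage, add_comm]
  have hsplit : {p : ℝ × ℝ | x < p.1 + p.2} = ({p | x < p.1 + p.2 ∧ p.1 ≤ A} ∪
      {p | x < p.1 + p.2 ∧ p.2 ≤ A}) ∪ {p | x < p.1 + p.2 ∧ A < p.1 ∧ A < p.2} := by
    ext p
    simp only [mem_ofPred_eq, mem_union]
    grind
  have hconv : tail (m.conv m) x = (m.prod m).real {p | x < p.1 + p.2} :=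
    map_measureReal_apply (by fun_prop) measurableSet_Ioi
  rw [hconv, hsplit, measureReal_union, measureReal_union, hswap, ← two_mul, jointExcess]
  · exact disjoint_left.2 fun p ⟨hp, h₁⟩ ⟨_, h₂⟩ => by linarith
  · measurability
  · exact disjoint_left.2 fun p hp ⟨_, h₁, h₂⟩ =>
      hp.elim (fun h => h.2.not_gt h₁) fun h => h.2.not_gt h₂
  · measurability

lemma measureReal_add_gt_and_snd_le (A x : ℝ) :
    (m.prod m).real {p | x < p.1 + p.2 ∧ p.2 ≤ A} = ∫ y in Iic A, tail m (x - y) ∂m := by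
  rw [measureReal_prod_eq_integral (by measurability), ← integral_indicator measurableSet_Iic]
  refine integral_congr_ae (ae_of_all _ fun y => ?_)
  by_cases hy : y ≤ A
  · have hslice : (fun z => (z, y)) ⁻¹' {p : ℝ × ℝ | x < p.1 + p.2 ∧ p.2 ≤ A} = Ioi (x - y) := by
      ext z
      simp [hy, sub_lt_iff_lt_add]
    exact (congrArg m.real hslice).trans
      (indicator_of_mem (mem_Iic.2 hy) fun y => tail m (x - y)).symm
  · simp [indicator, hy]

lemma MemL.tendsto_measureReal_add_gt_div (h : MemL m γ) (A : ℝ) :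
    Tendsto (fun x => (m.prod m).real {p | x < p.1 + p.2 ∧ p.2 ≤ A} / tail m x) atTop
      (nhds (∫ y in Iic A, Real.exp (γ * y) ∂m)) := by
  simp_rw [measureReal_add_gt_and_snd_le, ← integral_div]
  refine tendsto_integral_filter_of_dominated_convergence (fun _ => Real.exp (γ * A) + 1)
    (.of_forall fun x => ?_) ?_ (integrable_const _) (ae_of_all _ h.tendsto_div)
  · have hmono : Monotone fun y => tail m (x - y) := fun a b hab =>
      tail_antitone (sub_le_sub_left hab x)
    exact (hmono.measurable.div_const _).aestronglyMeasurable
  · filter_upwards [h.eventually_le (lt_add_one (Real.exp (γ * A)))] with x hx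
    filter_upwards [ae_restrict_mem measurableSet_Iic] with y hy
    rw [Real.norm_of_nonneg (by positivity), div_le_iff₀ (h.tail_pos x)]
    exact (tail_antitone (sub_le_sub_left hy x)).trans hx

lemma MemS.hasSingleBigJump (h : MemS m γ) : HasSingleBigJump m := by
  intro ε hε
  have hpos := h.memL.tail_pos
  obtain ⟨A, hA⟩ := ((tendsto_setIntegral_Iic h.integrable).eventually_const_lt
    (sub_lt_self _ (show 0 < ε / 2 by positivity))).exists
  have hconv := (isEquivalent_const_mul_iff_tendsto_div
    (mul_pos two_pos (integral_exp_pos h.integrable)).ne' fun x => (hpos x).ne').1 h.isEquivalent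
  have hlim := hconv.sub ((h.memL.tendsto_measureReal_add_gt_div A).const_mul 2)
  refine ⟨A, ?_⟩
  filter_upwards [hlim.eventually_lt_const (show _ < ε by linarith), eventually_ge_atTop (2 * A)]
    with x hx hxA
  rw [← div_le_iff₀ (hpos x)]
  refine le_of_eq_of_le ?_ hx.le
  rw [tail_conv_eq hxA]
  ring

lemma memS_of_hasSingleBigJump (hL : MemL m γ)
    (hint : Integrable (fun y => Real.exp (γ * y)) m) (hbig : HasSingleBigJump m) : MemS m γ := by
  have hpos := hL.tail_pos
  refine ⟨hL, hint, (isEquivalent_const_mul_iff_tendsto_div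
    (mul_pos two_pos (integral_exp_pos hint)).ne' fun x => (hpos x).ne').2 ?_⟩
  refine Metric.tendsto_nhds.2 fun ε hε => ?_
  obtain ⟨A₀, hA₀⟩ := hbig (ε / 4) (by positivity)
  obtain ⟨A, hA, hA₀A⟩ := ((Metric.tendsto_nhds.1 (tendsto_setIntegral_Iic hint) (ε / 8)
    (by positivity)).and (eventually_ge_atTop A₀)).exists
  filter_upwards [hA₀, Metric.tendsto_nhds.1 (hL.tendsto_measureReal_add_gt_div A) (ε / 8)
    (by positivity), eventually_ge_atTop (2 * A)] with x hexcess htrunc hxA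
  replace hexcess := (div_le_iff₀ (hpos x)).2 ((jointExcess_antitone m x hA₀A).trans hexcess)
  have hnonneg : 0 ≤ jointExcess m A x / tail m x := div_nonneg measureReal_nonneg (hpos x).le
  rw [tail_conv_eq hxA, add_div, mul_div_assoc]
  rw [Real.dist_eq, abs_lt] at *
  constructor <;> linarith [htrunc.1, htrunc.2, hA.1, hA.2]

end SingleBigJump

/-- `κ` is the reciprocal `1 / β` of the right endpoint `β ∈ (0, ∞]` of a measure `ν` on the
half-line, with `κ = 0` for `β = ∞`. -/
structure IsReciprocalEndpoint (ν : Measure ℝ) (κ : ℝ) : Prop where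
  nonneg : 0 ≤ κ
  mul_le_one : ∀ᵐ y ∂ν, κ * y ≤ 1
  tail_pos : ∀ y, 0 ≤ y → κ * y < 1 → 0 < tail ν y

lemma IsReciprocalEndpoint.tail_inv_pos {ν : Measure ℝ} {κ κ' : ℝ}
    (hκ : IsReciprocalEndpoint ν κ) (h : κ < κ') : 0 < tail ν κ'⁻¹ :=
  have hκ' : 0 < κ' := hκ.nonneg.trans_lt h
  hκ.tail_pos _ (inv_nonneg.2 hκ'.le) ((mul_inv_lt_iff₀ hκ').2 (by rwa [one_mul]))

/-- The tail of `ν`, dilated by any positive factor, is negligible with respect to that of `H`. -/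
def DilatedTailsNegligible (ν H : Measure ℝ) : Prop :=
  ∀ b > 0, (fun x => tail ν (b * x)) =o[atTop] tail H

lemma DilatedTailsNegligible.eventually_le {ν H : Measure ℝ} (h : DilatedTailsNegligible ν H)
    {z ε : ℝ} (hz : 0 < z) (hε : 0 < ε) : ∀ᶠ x in atTop, tail ν (x / z) ≤ ε * tail H x := by
  filter_upwards [(h z⁻¹ (inv_pos.2 hz)).bound hε] with x hx
  rwa [Real.norm_of_nonneg measureReal_nonneg, Real.norm_of_nonneg measureReal_nonneg,
    inv_mul_eq_div] at hx

section IndependentProduct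

variable {μ ν : Measure ℝ} {γ κ : ℝ}

lemma setOf_lt_mul_eq_Ioi {x y : ℝ} (hy : 0 < y) : {u : ℝ | x < u * y} = Ioi (x / y) := by
  ext u
  simp [div_lt_iff₀ hy]

lemma tail_mconv (x : ℝ) : tail (μ.mconv ν) x = (μ.prod ν).real {p | x < p.1 * p.2} :=
  map_measureReal_apply (by fun_prop) measurableSet_Ioi

variable [IsProbabilityMeasure μ] [IsProbabilityMeasure ν]

lemma tail_div_mul_tail_le_tail_mconv {x y : ℝ} (hx : 0 ≤ x) (hy : 0 < y) :
    tail μ (x / y) * tail ν y ≤ tail (μ.mconv ν) x := by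
  rw [tail_mconv, ← measureReal_prod_prod]
  refine measureReal_mono fun p ⟨h₁, h₂⟩ => ?_
  calc x < p.1 * y := (div_lt_iff₀ hy).1 h₁
    _ ≤ p.1 * p.2 :=
      mul_le_mul_of_nonneg_left (le_of_lt h₂) ((div_nonneg hx hy.le).trans (le_of_lt h₁))

lemma tail_mconv_pos (hμ : ∀ x, 0 < tail μ x) {y : ℝ} (hy : 0 < y) (hν : 0 < tail ν y) (x : ℝ) :
    0 < tail (μ.mconv ν) x :=
  calc 0 < tail μ (max x 0 / y) * tail ν y := mul_pos (hμ _) hν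
    _ ≤ tail (μ.mconv ν) (max x 0) := tail_div_mul_tail_le_tail_mconv (le_max_right _ _) hy
    _ ≤ tail (μ.mconv ν) x := tail_antitone (le_max_left _ _)

lemma measureReal_lt_mul_and_snd_le (hν : ∀ᵐ y ∂ν, 0 ≤ y) {x y₀ : ℝ} (hx : 0 ≤ x) :
    (μ.prod ν).real {p | x < p.1 * p.2 ∧ p.2 ≤ y₀} ≤ tail μ (x / y₀) * ν.real (Ioc 0 y₀) := by
  rw [← measureReal_prod_prod]
  refine measureReal_le_measureReal_of_ae ?_
  filter_upwards [Measure.quasiMeasurePreserving_snd.ae hν] with p hp ⟨hxp, hpy⟩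
  have hp₂ : 0 < p.2 := hp.lt_of_ne fun h => by simp [← h, hx.not_gt] at hxp
  have hp₁ : x / p.2 < p.1 := (div_lt_iff₀ hp₂).2 hxp
  exact ⟨(div_le_div_of_nonneg_left hx hp₂ hpy).trans_lt hp₁, hp₂, hpy⟩

lemma tail_mconv_le_add_tail (x b : ℝ) :
    tail (μ.mconv ν) x ≤ (μ.prod ν).real {p | x < p.1 * p.2 ∧ p.2 ≤ b} + tail ν b := by
  have hsnd : (μ.prod ν).real (Prod.snd ⁻¹' Ioi b) = tail ν b :=
    measurePreserving_snd.measureReal_preimage measurableSet_Ioi.nullMeasurableSet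
  rw [tail_mconv, ← hsnd]
  refine (measureReal_mono fun p hp => ?_).trans (measureReal_union_le _ _)
  exact (le_or_gt p.2 b).imp (⟨hp, ·⟩) id

lemma measureReal_prod_le_mul_tail_mconv {α : Type*} [MeasurableSpace α] {μ' : Measure α}
    [IsFiniteMeasure μ'] {s : Set (α × ℝ)} (hs : MeasurableSet s) {S : Set ℝ}
    (hsS : ∀ p ∈ s, p.2 ∈ S) (hS : ∀ y ∈ S, 0 < y) {C w : ℝ} (hC : 0 ≤ C)
    (h : ∀ y ∈ S, μ'.real ((fun a => (a, y)) ⁻¹' s) ≤ C * tail μ (w / y)) :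
    (μ'.prod ν).real s ≤ C * tail (μ.mconv ν) w := by
  rw [tail_mconv]
  refine measureReal_prod_le_mul hs (measurableSet_lt (by fun_prop) (by fun_prop))
    (ae_of_all _ fun y => ?_)
  by_cases hy : y ∈ S
  · exact (h y hy).trans_eq (congrArg (C * μ.real ·) (setOf_lt_mul_eq_Ioi (hS y hy)).symm)
  · have hempty : (fun a => (a, y)) ⁻¹' s = ∅ := eq_empty_of_forall_notMem fun a ha => hy (hsS _ ha)
    rw [hempty, measureReal_empty]
    positivity

lemma tendsto_sub_div_sub_div {y₀ y₁ : ℝ} (hy₀ : 0 < y₀) (hy : y₀ < y₁) (t : ℝ) :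
    Tendsto (fun x : ℝ => (x - t) / y₀ - x / y₁) atTop atTop := by
  have hpos : 0 < y₀⁻¹ - y₁⁻¹ := sub_pos.2 (inv_strictAnti₀ hy₀ hy)
  refine (tendsto_atTop_add_const_right _ (-(t / y₀)) (tendsto_id.const_mul_atTop hpos)).congr
    fun x => ?_
  simp only [id]
  ring

lemma eventually_measureReal_smallFactor_le (hν : ∀ᵐ y ∂ν, 0 ≤ y) {y₀ y₁ ε t : ℝ}
    (hy₁ : 0 < y₁) (hε : 0 ≤ ε)
    (h : ∀ᶠ x in atTop,
      tail μ ((x - t) / y₀) * ν.real (Ioc 0 y₀) ≤ ε * (tail μ (x / y₁) * tail ν y₁)) :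
    ∀ᶠ x in atTop, (μ.prod ν).real {p | x - t < p.1 * p.2 ∧ p.2 ≤ y₀} ≤
      ε * tail (μ.mconv ν) x := by
  filter_upwards [h, eventually_ge_atTop 0, eventually_ge_atTop t] with x hx hx₀ hxt
  calc _ ≤ tail μ ((x - t) / y₀) * ν.real (Ioc 0 y₀) :=
        measureReal_lt_mul_and_snd_le hν (sub_nonneg.2 hxt)
    _ ≤ ε * (tail μ (x / y₁) * tail ν y₁) := hx
    _ ≤ ε * tail (μ.mconv ν) x := by
      gcongr
      exact tail_div_mul_tail_le_tail_mconv hx₀ hy₁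

lemma MemL.exists_smallFactor_negligible (h : MemL μ γ) (hγ : 0 ≤ γ) (hν : ∀ᵐ y ∂ν, 0 ≤ y)
    (hκ : IsReciprocalEndpoint ν κ) {κ' ε : ℝ} (hκ' : κ < κ') (hε : 0 < ε) :
    ∃ y₀ > 0, γ / y₀ ≤ γ * κ' ∧ ∀ t, ∀ᶠ x in atTop,
      (μ.prod ν).real {p | x - t < p.1 * p.2 ∧ p.2 ≤ y₀} ≤ ε * tail (μ.mconv ν) x := by
  obtain ⟨κ₁, hκκ₁, hκ₁κ'⟩ := exists_between hκ'
  have hκ₁ : 0 < κ₁ := hκ.nonneg.trans_lt hκκ₁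
  have hy₁ : 0 < κ₁⁻¹ := inv_pos.2 hκ₁
  have hν₁ : 0 < tail ν κ₁⁻¹ := hκ.tail_inv_pos hκκ₁
  rcases hγ.eq_or_lt with rfl | hγ
  · obtain ⟨y₀, hsmall, hy₀, hy₀₁⟩ :=
      (((tendsto_measureReal_Ioc_zero (m := ν) 0).eventually_lt_const (mul_pos hε hν₁)).and
        (Ioo_mem_nhdsGT hy₁)).exists
    refine ⟨y₀, hy₀, by simp, fun t => eventually_measureReal_smallFactor_le hν hy₁ hε.le ?_⟩
    filter_upwards [(tendsto_sub_div_sub_div hy₀ hy₀₁ t).eventually_ge_atTop 0] with x hx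
    rw [mul_left_comm]
    gcongr
    exact tail_antitone (sub_nonneg.1 hx)
  · have hκ'pos : 0 < κ' := hκ₁.trans hκ₁κ'
    refine ⟨κ'⁻¹, inv_pos.2 hκ'pos, by rw [div_inv_eq_mul], fun t =>
      eventually_measureReal_smallFactor_le hν hy₁ hε.le ?_⟩
    filter_upwards [(h.isLittleO_tail_comp hγ (tendsto_id.atTop_div_const hy₁)
      (tendsto_sub_div_sub_div (inv_pos.2 hκ'pos) (inv_strictAnti₀ hκ₁ hκ₁κ') t)).bound
      (mul_pos hε hν₁)] with x hx
    rw [Real.norm_of_nonneg measureReal_nonneg, Real.norm_of_nonneg measureReal_nonneg] at hx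
    calc _ ≤ tail μ ((x - t) / κ'⁻¹) := mul_le_of_le_one_right measureReal_nonneg measureReal_le_one
      _ ≤ ε * tail ν κ₁⁻¹ * tail μ (x / κ₁⁻¹) := hx
      _ = ε * (tail μ (x / κ₁⁻¹) * tail ν κ₁⁻¹) := by ring

lemma MemL.eventually_tail_mconv_sub_le (h : MemL μ γ) (hγ : 0 ≤ γ) (hν : ∀ᵐ y ∂ν, 0 ≤ y)
    (hκ : IsReciprocalEndpoint ν κ) (hneg : DilatedTailsNegligible ν (μ.mconv ν)) {t D : ℝ}
    (ht : 0 < t) (hD : Real.exp (γ * κ * t) < D) :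
    ∀ᶠ x in atTop, tail (μ.mconv ν) (x - t) ≤ D * tail (μ.mconv ν) x := by
  obtain ⟨D₀, hD₀, hD₀D⟩ := exists_between hD
  obtain ⟨κ', hexp, hκ'⟩ : ∃ κ', Real.exp (γ * κ' * t) < D₀ ∧ κ < κ' := by
    have hcont : Tendsto (fun κ' => Real.exp (γ * κ' * t)) (nhdsWithin κ (Ioi κ))
        (nhds (Real.exp (γ * κ * t))) :=
      (Continuous.tendsto (by fun_prop) κ).mono_left nhdsWithin_le_nhds
    exact ((hcont.eventually_lt_const hD₀).and self_mem_nhdsWithin).exists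
  have hε : 0 < (D - D₀) / 2 := by linarith
  obtain ⟨y₀, hy₀, hγy₀, hsmall⟩ := h.exists_smallFactor_negligible hγ hν hκ hκ' hε
  obtain ⟨z, hz, hshift⟩ : ∃ z > 0, ∀ u ≥ z, tail μ (u - t / y₀) ≤ D₀ * tail μ u := by
    refine h.exists_forall_ge_le (hexp.trans_le' (Real.exp_le_exp.2 ?_))
    calc γ * (t / y₀) = γ / y₀ * t := by ring
      _ ≤ γ * κ' * t := by gcongr
  filter_upwards [hsmall t, hneg.eventually_le hz hε] with x hsm hlarge
  have hmid : (μ.prod ν).real {p | x - t < p.1 * p.2 ∧ p.2 ∈ Ioc y₀ (x / z)} ≤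
      D₀ * tail (μ.mconv ν) x := by
    refine measureReal_prod_le_mul_tail_mconv (by measurability) (fun p hp => hp.2)
      (fun y hy => hy₀.trans hy.1) ((Real.exp_pos _).trans hD₀).le fun y hy => ?_
    have hypos : 0 < y := hy₀.trans hy.1
    have hzy : z ≤ x / y := (le_div_comm₀ hypos hz).1 hy.2
    refine (measureReal_mono fun u hu => ?_).trans (hshift (x / y) hzy)
    have hu' : (x - t) / y < u := (div_lt_iff₀ hypos).2 hu.1
    have hty : t / y ≤ t / y₀ := div_le_div_of_nonneg_left ht.le hy₀ hy.1.le
    rw [sub_div] at hu'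
    exact (sub_le_sub_left hty _).trans_lt hu'
  have hsplit : (μ.prod ν).real {p | x - t < p.1 * p.2 ∧ p.2 ≤ x / z} ≤
      (μ.prod ν).real {p | x - t < p.1 * p.2 ∧ p.2 ≤ y₀} +
      (μ.prod ν).real {p | x - t < p.1 * p.2 ∧ p.2 ∈ Ioc y₀ (x / z)} := by
    refine (measureReal_union_le _ _).trans' (measureReal_mono fun p ⟨hp, hpz⟩ => ?_)
    exact (le_or_gt p.2 y₀).imp (⟨hp, ·⟩) (⟨hp, ·, hpz⟩)
  linarith [tail_mconv_le_add_tail (μ := μ) (ν := ν) (x - t) (x / z)]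

lemma measureReal_lt_mul_and_snd_le_le_snd_mem (hν : ∀ᵐ y ∂ν, 0 ≤ y) (hκ : ∀ᵐ y ∂ν, κ * y ≤ 1)
    {x b : ℝ} (hx : 0 ≤ x) : (μ.prod ν).real {p | x < p.1 * p.2 ∧ p.2 ≤ b} ≤
      (μ.prod ν).real {p | x < p.1 * p.2 ∧ p.2 ∈ {y | 0 < y ∧ κ * y ≤ 1 ∧ y ≤ b}} := by
  refine measureReal_le_measureReal_of_ae ?_
  filter_upwards [Measure.quasiMeasurePreserving_snd.ae hν,
    Measure.quasiMeasurePreserving_snd.ae hκ] with p hp₀ hp₁ ⟨hxp, hpb⟩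
  exact ⟨hxp, hp₀.lt_of_ne fun h => by simp [← h, hx.not_gt] at hxp, hp₁, hpb⟩

lemma MemL.eventually_le_tail_mconv_sub (h : MemL μ γ) (hν : ∀ᵐ y ∂ν, 0 ≤ y)
    (hκ : IsReciprocalEndpoint ν κ) (hneg : DilatedTailsNegligible ν (μ.mconv ν)) {t D : ℝ}
    (ht : 0 < t) (hD : D < Real.exp (γ * κ * t)) :
    ∀ᶠ x in atTop, D * tail (μ.mconv ν) x ≤ tail (μ.mconv ν) (x - t) := by
  obtain ⟨D₀, hD₀, hD₀exp⟩ := exists_between (max_lt hD (Real.exp_pos _))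
  obtain ⟨hDD₀, hD₀pos⟩ := max_lt_iff.1 hD₀
  obtain ⟨z, hz, hshift⟩ : ∃ z > 0, ∀ u ≥ z, tail μ (u - -(κ * t)) ≤ D₀⁻¹ * tail μ u := by
    refine h.exists_forall_ge_le ?_
    rw [mul_neg, Real.exp_neg, ← mul_assoc]
    exact inv_strictAnti₀ hD₀pos hD₀exp
  have hz' : 0 < z + κ * t := add_pos_of_pos_of_nonneg hz (mul_nonneg hκ.nonneg ht.le)
  have hε : 0 < 1 - D / D₀ := sub_pos.2 ((div_lt_one hD₀pos).2 hDD₀)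
  filter_upwards [hneg.eventually_le hz' hε, eventually_ge_atTop 0] with x hlarge hx₀
  have hmain : (μ.prod ν).real {p | x < p.1 * p.2 ∧ p.2 ∈ {y | 0 < y ∧ κ * y ≤ 1 ∧
      y ≤ x / (z + κ * t)}} ≤ D₀⁻¹ * tail (μ.mconv ν) (x - t) := by
    refine measureReal_prod_le_mul_tail_mconv (by measurability) (fun p hp => hp.2)
      (fun y hy => hy.1) (inv_pos.2 hD₀pos).le ?_
    rintro y ⟨hy, hκy, hyz⟩
    have hzy : z + κ * t ≤ x / y := (le_div_comm₀ hy hz').1 hyz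
    have hκt : κ * t ≤ t / y := by
      rw [le_div_iff₀ hy]
      nlinarith
    calc _ ≤ tail μ (x / y - κ * t - -(κ * t)) := by
          rw [sub_neg_eq_add, sub_add_cancel]
          exact measureReal_mono fun u hu => (div_lt_iff₀ hy).2 hu.1
      _ ≤ D₀⁻¹ * tail μ (x / y - κ * t) := hshift _ (by linarith)
      _ ≤ D₀⁻¹ * tail μ ((x - t) / y) := by
        gcongr
        refine tail_antitone ?_
        rw [sub_div]
        linarith
  have htotal := (tail_mconv_le_add_tail (μ := μ) (ν := ν) x (x / (z + κ * t))).trans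
    (add_le_add
      ((measureReal_lt_mul_and_snd_le_le_snd_mem hν hκ.mul_le_one hx₀).trans hmain) hlarge)
  rw [← mul_le_mul_iff_right₀ (inv_pos.2 hD₀pos), ← mul_assoc, inv_mul_eq_div]
  linarith

lemma MemL.mconv (h : MemL μ γ) (hγ : 0 ≤ γ) (hν : ∀ᵐ y ∂ν, 0 ≤ y)
    (hκ : IsReciprocalEndpoint ν κ) (hneg : DilatedTailsNegligible ν (μ.mconv ν)) :
    MemL (μ.mconv ν) (γ * κ) := by
  have hpos : ∀ x, 0 < tail (μ.mconv ν) x :=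
    tail_mconv_pos h.tail_pos (inv_pos.2 (hκ.nonneg.trans_lt (lt_add_one κ)))
      (hκ.tail_inv_pos (lt_add_one κ))
  refine ⟨hpos, fun t ht =>
    (isEquivalent_const_mul_iff_eventually_le (Real.exp_ne_zero _) hpos).2 ⟨?_, ?_⟩⟩
  · exact fun D hD => h.eventually_tail_mconv_sub_le hγ hν hκ hneg ht hD
  · exact fun D hD => h.eventually_le_tail_mconv_sub hν hκ hneg ht hD

lemma integrable_exp_mul_mconv (hν : ∀ᵐ y ∂ν, 0 ≤ y) (hγ : 0 ≤ γ)
    (hκ : IsReciprocalEndpoint ν κ) (hint : Integrable (fun x => Real.exp (γ * x)) μ) :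
    Integrable (fun x => Real.exp (γ * κ * x)) (μ.mconv ν) := by
  refine (integrable_map_measure (by fun_prop) (by fun_prop)).2 ?_
  refine ((integrable_const 1).add (hint.comp_fst ν)).mono' (by fun_prop) ?_
  filter_upwards [Measure.quasiMeasurePreserving_snd.ae hν,
    Measure.quasiMeasurePreserving_snd.ae hκ.mul_le_one] with p hp₀ hp₁
  have hbound : Real.exp (γ * κ * (p.1 * p.2)) ≤ max 1 (Real.exp (γ * p.1)) := by
    rw [← Real.exp_zero, ← Real.exp_monotone.map_max, Real.exp_le_exp]
    have hκp : 0 ≤ κ * p.2 := mul_nonneg hκ.nonneg hp₀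
    rcases le_total p.1 0 with hp | hp
    · exact le_max_of_le_left (by nlinarith [mul_nonneg hγ hκp])
    · exact le_max_of_le_right (by nlinarith [mul_nonneg hγ hp])
  rw [Function.comp_apply, Real.norm_of_nonneg (Real.exp_pos _).le]
  exact hbound.trans (max_le_add_of_nonneg zero_le_one (Real.exp_pos _).le)

end IndependentProduct

section IndependentProductBigJump

variable {μ ν : Measure ℝ} {γ : ℝ} [IsProbabilityMeasure μ] [IsProbabilityMeasure ν]

lemma jointExcess_mconv_le_two_mul (A x : ℝ) :
    jointExcess (μ.mconv ν) A x ≤ 2 * ((μ.prod ν).prod (μ.prod ν)).real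
      {q | (x < q.1.1 * q.1.2 + q.2.1 * q.2.2 ∧ A < q.1.1 * q.1.2 ∧ A < q.2.1 * q.2.2) ∧
        q.2.2 ≤ q.1.2} := by
  have hmul : MeasurePreserving (fun p : ℝ × ℝ => p.1 * p.2) (μ.prod ν) (μ.mconv ν) :=
    ⟨by fun_prop, rfl⟩
  have hswap := (Measure.measurePreserving_swap (μ := μ.prod ν)
    (ν := μ.prod ν)).measureReal_preimage (s :=
      {q | (x < q.1.1 * q.1.2 + q.2.1 * q.2.2 ∧ A < q.1.1 * q.1.2 ∧ A < q.2.1 * q.2.2) ∧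
        q.2.2 ≤ q.1.2}) (MeasurableSet.nullMeasurableSet (by measurability))
  rw [jointExcess, ← (hmul.prod hmul).measureReal_preimage
    (MeasurableSet.nullMeasurableSet (by measurability)), two_mul]
  nth_rewrite 1 [← hswap]
  refine (measureReal_union_le _ _).trans' (measureReal_mono ?_)
  rintro q ⟨hx, h₁, h₂⟩
  exact (le_total q.1.2 q.2.2).imp (⟨⟨(add_comm _ _).trans_gt hx, h₂, h₁⟩, ·⟩) (⟨⟨hx, h₁, h₂⟩, ·⟩)

lemma measureReal_lt_add_mul_le {a x z C : ℝ} (hz : 0 < z) (hC : 0 ≤ C)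
    (h : ∀ u ≥ z, jointExcess μ a u ≤ C * tail μ u) :
    ((μ.prod ν).prod (μ.prod ν)).real {q | (x < (q.2.1 + q.1.1) * q.1.2 ∧ a < q.2.1 ∧ a < q.1.1) ∧
      q.1.2 ∈ Ioc 0 (x / z)} ≤ C * tail (μ.mconv ν) x := by
  have hpres : MeasurePreserving (fun q : (ℝ × ℝ) × ℝ × ℝ => ((q.2.1, q.1.1), q.1.2))
      ((μ.prod ν).prod (μ.prod ν)) ((μ.prod μ).prod ν) :=
    ((measurePreserving_prodAssoc μ μ ν).symm _).comp
      (Measure.measurePreserving_swap.comp ((MeasurePreserving.id _).prod measurePreserving_fst))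
  have hs : MeasurableSet {p : (ℝ × ℝ) × ℝ | (x < (p.1.1 + p.1.2) * p.2 ∧ a < p.1.1 ∧ a < p.1.2) ∧
      p.2 ∈ Ioc 0 (x / z)} := by measurability
  refine (hpres.measureReal_preimage hs.nullMeasurableSet).trans_le
    (measureReal_prod_le_mul_tail_mconv hs (fun p hp => hp.2) (fun y hy => hy.1) hC
      fun y hy => ?_)
  refine (measureReal_mono ?_).trans (h (x / y) ((le_div_comm₀ hy.1 hz).1 hy.2))
  rintro p ⟨⟨hx, h₁, h₂⟩, -⟩
  exact ⟨(div_lt_iff₀ hy.1).2 hx, h₁, h₂⟩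

lemma measureReal_lt_add_const_mul_le {a b x z C : ℝ} (hz : 0 < z) (hC : 0 ≤ C)
    (h : ∀ u ≥ z, tail μ (u - a) ≤ C * tail μ u) :
    ((μ.prod ν).prod (μ.prod ν)).real ({p | x < (p.1 + a) * p.2 ∧ p.2 ∈ Ioc 0 (x / z)} ×ˢ
      {p | b < p.2}) ≤ C * tail (μ.mconv ν) x * tail ν b := by
  have hsnd : (μ.prod ν).real {p | b < p.2} = tail ν b :=
    measurePreserving_snd.measureReal_preimage measurableSet_Ioi.nullMeasurableSet
  rw [measureReal_prod_prod, hsnd]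
  refine mul_le_mul_of_nonneg_right ?_ measureReal_nonneg
  refine measureReal_prod_le_mul_tail_mconv (by measurability) (fun p hp => hp.2)
    (fun y hy => hy.1) hC fun y hy => ?_
  refine (measureReal_mono fun u hu => ?_).trans (h (x / y) ((le_div_comm₀ hy.1 hz).1 hy.2))
  exact sub_lt_iff_lt_add.2 ((div_lt_iff₀ hy.1).2 hu.1)

lemma measureReal_lt_const_mul_add_le {H : Measure ℝ} [IsProbabilityMeasure H] {a A x C : ℝ}
    (ha : 0 < a) (h : ∀ u ≥ A, tail ν (u / a) ≤ C * tail H u) :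
    (ν.prod H).real {p | x < a * p.1 + p.2 ∧ A < a * p.1 ∧ A < p.2} ≤ C * jointExcess H A x := by
  refine measureReal_prod_le_mul (by measurability) (by measurability) (ae_of_all _ fun y => ?_)
  have hslice : (fun u => (u, y)) ⁻¹' {p : ℝ × ℝ | x < p.1 + p.2 ∧ A < p.1 ∧ A < p.2} =
      {u | max (x - y) A < u ∧ A < y} := by
    ext u
    simp only [mem_preimage, mem_ofPred_eq, max_lt_iff, sub_lt_iff_lt_add, and_assoc]
  rw [hslice]
  by_cases hy : A < y
  · simp only [hy, and_true]
    refine (measureReal_mono fun u hu => ?_).trans (h _ (le_max_right (x - y) A))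
    exact (div_lt_iff₀' ha).2 (max_lt (sub_lt_iff_lt_add.2 hu.1) hu.2.1)
  · simp [hy]

lemma mem_cover_of_mem_jointExcess {a A x z : ℝ} (ha : 0 < a) (hA : 0 ≤ A)
    {q : (ℝ × ℝ) × ℝ × ℝ} (hq : 0 ≤ q.2.2) (h : (x < q.1.1 * q.1.2 + q.2.1 * q.2.2 ∧
      A < q.1.1 * q.1.2 ∧ A < q.2.1 * q.2.2) ∧ q.2.2 ≤ q.1.2) :
    q ∈ {q : (ℝ × ℝ) × ℝ × ℝ | x / z < q.1.2} ∪
      ({q | (x < (q.2.1 + q.1.1) * q.1.2 ∧ a < q.2.1 ∧ a < q.1.1) ∧ q.1.2 ∈ Ioc 0 (x / z)} ∪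
      ({p | x < (p.1 + a) * p.2 ∧ p.2 ∈ Ioc 0 (x / z)} ×ˢ {p | A / a < p.2} ∪
      {q | x < a * q.1.2 + q.2.1 * q.2.2 ∧ A < a * q.1.2 ∧ A < q.2.1 * q.2.2})) := by
  obtain ⟨⟨hx, h₁, h₂⟩, hle⟩ := h
  have hY₂ : 0 < q.2.2 := hq.lt_of_ne fun h => by simp [← h, hA.not_gt] at h₂
  have hY₁ : 0 < q.1.2 := hY₂.trans_le hle
  have hX₂ : 0 < q.2.1 := pos_of_mul_pos_left (hA.trans_lt h₂) hY₂.le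
  rcases lt_or_ge (x / z) q.1.2 with hlarge | hsmall
  · exact .inl hlarge
  rcases le_or_gt q.1.1 a with hX₁a | hX₁a
  · have := mul_le_mul_of_nonneg_right hX₁a hY₁.le
    exact .inr (.inr (.inr ⟨by linarith, by linarith, h₂⟩))
  rcases le_or_gt q.2.1 a with hX₂a | hX₂a
  · have hle₂ := mul_le_mul_of_nonneg_right hX₂a hY₂.le
    have hle₁ := mul_le_mul_of_nonneg_left hle ha.le
    exact .inr (.inr (.inl ⟨⟨by linarith, hY₁, hsmall⟩, (div_lt_iff₀' ha).2 (by linarith)⟩))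
  · have := mul_le_mul_of_nonneg_left hle hX₂.le
    exact .inr (.inl ⟨⟨by linarith, hX₂a, hX₁a⟩, hY₁, hsmall⟩)

lemma jointExcess_mconv_le_add (hν : ∀ᵐ y ∂ν, 0 ≤ y) {a A x z C C' C'' : ℝ} (ha : 0 < a)
    (hA : 0 ≤ A) (hz : 0 < z) (hC : 0 ≤ C) (hC' : 0 ≤ C')
    (hbig : ∀ u ≥ z, jointExcess μ a u ≤ C * tail μ u)
    (hshift : ∀ u ≥ z, tail μ (u - a) ≤ C' * tail μ u)
    (hneg : ∀ u ≥ A, tail ν (u / a) ≤ C'' * tail (μ.mconv ν) u) :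
    jointExcess (μ.mconv ν) A x ≤ 2 * (tail ν (x / z) + (C * tail (μ.mconv ν) x +
      (C' * tail (μ.mconv ν) x * tail ν (A / a) + C'' * jointExcess (μ.mconv ν) A x))) := by
  have hsnd : MeasurePreserving (fun q : (ℝ × ℝ) × ℝ × ℝ => q.1.2) ((μ.prod ν).prod (μ.prod ν)) ν :=
    measurePreserving_snd.comp measurePreserving_fst
  have hmul : MeasurePreserving (fun p : ℝ × ℝ => p.1 * p.2) (μ.prod ν) (μ.mconv ν) :=
    ⟨by fun_prop, rfl⟩
  have hnonneg : ∀ᵐ q ∂(μ.prod ν).prod (μ.prod ν), 0 ≤ q.2.2 :=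
    (Measure.quasiMeasurePreserving_snd.comp Measure.quasiMeasurePreserving_snd).ae hν
  refine (jointExcess_mconv_le_two_mul A x).trans (mul_le_mul_of_nonneg_left ?_ zero_le_two)
  refine (measureReal_le_measureReal_of_ae (hnonneg.mono fun q hq h =>
    mem_cover_of_mem_jointExcess (z := z) ha hA hq h)).trans ?_
  refine (measureReal_union_le _ _).trans (add_le_add ?_ ((measureReal_union_le _ _).trans
    (add_le_add (measureReal_lt_add_mul_le hz hC hbig) ((measureReal_union_le _ _).trans
      (add_le_add (measureReal_lt_add_const_mul_le hz hC' hshift) ?_)))))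
  · exact (hsnd.measureReal_preimage measurableSet_Ioi.nullMeasurableSet).le
  · exact (((measurePreserving_snd (μ := μ) (ν := ν)).prod hmul).measureReal_preimage
      (MeasurableSet.nullMeasurableSet (by measurability))).trans_le
        (measureReal_lt_const_mul_add_le ha hneg)

lemma tendsto_tail_atTop (m : Measure ℝ) [IsProbabilityMeasure m] :
    Tendsto (tail m) atTop (nhds 0) := by
  simpa [funext tail_eq_one_sub_cdf] using (tendsto_cdf_atTop m).const_sub 1

lemma HasSingleBigJump.mconv (h : HasSingleBigJump μ) (hμ : MemL μ γ) (hν : ∀ᵐ y ∂ν, 0 ≤ y)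
    (hneg : DilatedTailsNegligible ν (μ.mconv ν)) : HasSingleBigJump (μ.mconv ν) := by
  intro ε hε
  obtain ⟨ε', hε', rfl⟩ : ∃ ε' > 0, 12 * ε' = ε := ⟨ε / 12, by positivity, by ring⟩
  obtain ⟨a, ha, hbig⟩ := h.exists_ge hε' 1
  replace ha : 0 < a := one_pos.trans_le ha
  obtain ⟨z, hz, hz₁⟩ := eventually_forall_ge_atTop.2 (hbig.and (hμ.eventually_le (lt_add_one _)))
    |>.and (eventually_gt_atTop 0) |>.exists
  set K := Real.exp (γ * a) + 1
  have hK : 0 < K := by positivity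
  have htail : Tendsto (fun A => K * tail ν (A / a)) atTop (nhds 0) := by
    simpa using ((tendsto_tail_atTop ν).comp (tendsto_id.atTop_div_const ha)).const_mul K
  obtain ⟨A, ⟨hAK, hA⟩, hAneg⟩ := (htail.eventually_lt_const hε').and (eventually_ge_atTop 0)
    |>.and (eventually_forall_ge_atTop.2 (hneg.eventually_le ha (show (0 : ℝ) < 1 / 4 by norm_num)))
    |>.exists
  refine ⟨A, ?_⟩
  filter_upwards [hneg.eventually_le hz₁ hε'] with x hx
  have hle := jointExcess_mconv_le_add (x := x) hν ha hA hz₁ hε'.le hK.le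
    (fun u hu => (hz u hu).1) (fun u hu => (hz u hu).2) hAneg
  have hmid : K * tail (μ.mconv ν) x * tail ν (A / a) ≤ ε' * tail (μ.mconv ν) x :=
    (mul_right_comm _ _ _).trans_le (mul_le_mul_of_nonneg_right hAK.le measureReal_nonneg)
  linarith

end IndependentProductBigJump

section AsymptoticProduct

open scoped NNReal

/-- A law `J` on the plane that is comparable with the product law `μ ⊗ ν` and is asymptotic to it
as the first coordinate tends to infinity. The second marginal of `J` need not be `ν`. -/
structure IsAsymptoticProduct (J : Measure (ℝ × ℝ)) (μ ν : Measure ℝ) : Prop where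
  exists_le_smul : ∃ K : ℝ≥0, J ≤ K • μ.prod ν
  exists_restrict_le_smul : ∀ r > (1 : ℝ≥0), ∃ u : ℝ,
    J.restrict {p | u ≤ p.1} ≤ r • μ.prod ν ∧ (μ.prod ν).restrict {p | u ≤ p.1} ≤ r • J

lemma measureReal_le_mul_of_le_smul {α : Type*} [MeasurableSpace α] {m m' : Measure α}
    [IsFiniteMeasure m] {K : ℝ≥0} (h : m' ≤ K • m) (s : Set α) : m'.real s ≤ K * m.real s := by
  have hK : (K • m).real s = K * m.real s := by simp
  rw [← hK]
  exact ENNReal.toReal_mono (measure_ne_top _ _) (h s)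

lemma isBigO_tail_of_le_smul {m m' : Measure ℝ} [IsFiniteMeasure m] {K : ℝ≥0} (h : m' ≤ K • m)
    (l : Filter ℝ) : tail m' =O[l] tail m :=
  .of_bound K (.of_forall fun x => by
    rw [Real.norm_of_nonneg measureReal_nonneg, Real.norm_of_nonneg measureReal_nonneg]
    exact measureReal_le_mul_of_le_smul h _)

lemma DilatedTailsNegligible.mono {ν ν' H H' : Measure ℝ} (h : DilatedTailsNegligible ν H)
    (hν : tail ν' =O[atTop] tail ν) (hH : tail H =O[atTop] tail H') :
    DilatedTailsNegligible ν' H' := fun b hb =>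
  ((hν.comp_tendsto (tendsto_id.const_mul_atTop hb)).trans_isLittleO (h b hb)).trans_isBigO hH

lemma IsReciprocalEndpoint.of_le_smul {ν ν' : Measure ℝ} [IsFiniteMeasure ν'] {κ : ℝ} {K K' : ℝ≥0}
    (h : IsReciprocalEndpoint ν κ) (hle : ν' ≤ K • ν) (hle' : ν ≤ K' • ν') :
    IsReciprocalEndpoint ν' κ where
  nonneg := h.nonneg
  mul_le_one := (Measure.absolutelyContinuous_of_le_smul hle).ae_le h.mul_le_one
  tail_pos y hy hκy := pos_of_mul_pos_right
    ((h.tail_pos y hy hκy).trans_le (measureReal_le_mul_of_le_smul hle' _)) K'.2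

lemma HasSingleBigJump.mono {m m' : Measure ℝ} [IsProbabilityMeasure m] {K : ℝ≥0}
    (h : HasSingleBigJump m) (hle : m' ≤ K • m) (hO : tail m =O[atTop] tail m') :
    HasSingleBigJump m' := by
  intro ε hε
  obtain ⟨C, hC, hO⟩ := hO.exists_pos
  obtain ⟨A, hA⟩ := h (ε / ((K * K + 1) * C)) (by positivity)
  have hprod : m'.prod m' ≤ (K * K) • m.prod m := by
    rw [mul_smul, ← Measure.prod_smul_right, ← Measure.prod_smul_left]
    exact Measure.prod_mono hle hle
  refine ⟨A, ?_⟩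
  filter_upwards [hA, hO.bound] with x hx hCx
  rw [Real.norm_of_nonneg measureReal_nonneg, Real.norm_of_nonneg measureReal_nonneg] at hCx
  calc jointExcess m' A x ≤ (K * K) * jointExcess m A x := by
        exact_mod_cast measureReal_le_mul_of_le_smul hprod _
    _ ≤ (K * K + 1) * jointExcess m A x := by
        gcongr
        · exact measureReal_nonneg
        · linarith
    _ ≤ (K * K + 1) * (ε / ((K * K + 1) * C) * (C * tail m' x)) := by
        gcongr
        exact hx.trans (by gcongr)
    _ = ε * tail m' x := by field_simp

variable {J J' : Measure (ℝ × ℝ)} {μ ν : Measure ℝ} {γ κ : ℝ}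

lemma tail_map_mul (x : ℝ) : tail (J.map fun p => p.1 * p.2) x = J.real {p | x < p.1 * p.2} :=
  map_measureReal_apply (by fun_prop) measurableSet_Ioi

lemma tail_map_mul_le_add_tail_snd [IsFiniteMeasure J] (hJ : ∀ᵐ y ∂J.snd, 0 ≤ y) {u u' : ℝ}
    (hu : u ≤ u') (hu' : 0 < u') (x : ℝ) :
    tail (J.map fun p => p.1 * p.2) x ≤
      (J.restrict {p | u ≤ p.1}).real {p | x < p.1 * p.2} + tail J.snd (x / u') := by
  have hsnd : tail J.snd (x / u') = J.real {p | x / u' < p.2} :=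
    map_measureReal_apply measurable_snd measurableSet_Ioi
  rw [tail_map_mul, hsnd, measureReal_restrict_apply (by measurability)]
  refine (measureReal_union_le _ _).trans' (measureReal_le_measureReal_of_ae ?_)
  filter_upwards [ae_of_ae_map measurable_snd.aemeasurable hJ] with p hp hx
  refine (le_or_gt u p.1).imp (⟨hx, ·⟩) fun hpu => (div_lt_iff₀' hu').2 ?_
  exact hx.trans_le (mul_le_mul_of_nonneg_right (hpu.le.trans hu) hp)

lemma eventually_tail_map_mul_le [IsFiniteMeasure J] [IsFiniteMeasure J'] {G : Measure ℝ}
    (hJ : ∀ᵐ y ∂J.snd, 0 ≤ y) (hneg : DilatedTailsNegligible J.snd G) {r : ℝ≥0} {u ε : ℝ}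
    (hle : J.restrict {p | u ≤ p.1} ≤ r • J') (hε : 0 < ε) :
    ∀ᶠ x in atTop, tail (J.map fun p => p.1 * p.2) x ≤
      r * tail (J'.map fun p => p.1 * p.2) x + ε * tail G x := by
  have hu' : 0 < max u 1 := lt_max_of_lt_right one_pos
  filter_upwards [hneg.eventually_le hu' hε] with x hx
  refine (tail_map_mul_le_add_tail_snd hJ (le_max_left u 1) hu' x).trans (add_le_add ?_ hx)
  rw [tail_map_mul]
  exact measureReal_le_mul_of_le_smul hle _

lemma snd_le_smul_of_le_smul_prod [IsProbabilityMeasure μ] [SFinite ν] {K : ℝ≥0}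
    (h : J ≤ K • μ.prod ν) : J.snd ≤ K • ν := by
  have := Measure.map_mono h measurable_snd
  rwa [Measure.map_smul, ← Measure.snd, ← Measure.snd, Measure.snd_prod] at this

lemma map_mul_le_smul_mconv {K : ℝ≥0} (h : J ≤ K • μ.prod ν) :
    J.map (fun p => p.1 * p.2) ≤ K • μ.mconv ν :=
  (Measure.map_mono h (by fun_prop)).trans_eq (Measure.map_smul _ _ _)

lemma IsAsymptoticProduct.exists_le_smul_snd [IsFiniteMeasure μ] [SFinite ν]
    (h : IsAsymptoticProduct J μ ν) (hpos : ∀ x, 0 < tail μ x) : ∃ K : ℝ≥0, ν ≤ K • J.snd := by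
  obtain ⟨u, -, hu⟩ := h.exists_restrict_le_smul 2 one_lt_two
  have hμu : μ (Ici u) ≠ 0 := fun h₀ => (hpos u).ne' <|
    (measureReal_eq_zero_iff).2 (measure_mono_null Ioi_subset_Ici_self h₀)
  have hset : {p : ℝ × ℝ | u ≤ p.1} = Ici u ×ˢ univ := by
    ext
    simp
  have hle : μ (Ici u) • ν ≤ (2 : ℝ≥0) • J.snd := by
    rw [hset, ← Measure.prod_restrict, Measure.restrict_univ] at hu
    have hsnd := Measure.map_mono hu measurable_snd
    rwa [Measure.map_snd_prod, Measure.restrict_apply_univ, Measure.map_smul] at hsnd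
  refine ⟨(μ (Ici u))⁻¹.toNNReal * 2, Measure.le_iff'.2 fun s => ?_⟩
  calc ν s = (μ (Ici u))⁻¹ * (μ (Ici u) * ν s) := by
        rw [← mul_assoc, ENNReal.inv_mul_cancel hμu (measure_ne_top _ _), one_mul]
    _ ≤ (μ (Ici u))⁻¹ * (2 * J.snd s) := mul_le_mul_right (hle s) _
    _ = _ := by
      rw [mul_smul, Measure.smul_apply, Measure.smul_apply, ENNReal.smul_def, ENNReal.smul_def,
        ENNReal.coe_toNNReal (ENNReal.inv_ne_top.2 hμu)]
      rfl

variable [IsProbabilityMeasure J] [IsProbabilityMeasure μ] [IsProbabilityMeasure ν]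

lemma IsAsymptoticProduct.isEquivalent_tail_map_mul (h : IsAsymptoticProduct J μ ν)
    (hpos : ∀ x, 0 < tail (μ.mconv ν) x) (hJ : ∀ᵐ y ∂J.snd, 0 ≤ y) (hν : ∀ᵐ y ∂ν, 0 ≤ y)
    (hnegJ : DilatedTailsNegligible J.snd (μ.mconv ν))
    (hnegν : DilatedTailsNegligible ν (μ.mconv ν)) :
    tail (J.map fun p => p.1 * p.2) ~[atTop] tail (μ.mconv ν) := by
  have hsnd : (μ.prod ν).snd = ν := by simp
  suffices tail (J.map fun p => p.1 * p.2) ~[atTop] fun x => 1 * tail (μ.mconv ν) x by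
    simpa only [one_mul] using this
  refine (isEquivalent_const_mul_iff_eventually_le one_ne_zero hpos).2
    ⟨fun b hb => ?_, fun b hb => ?_⟩
  · lift b to ℝ≥0 using zero_le_one.trans hb.le
    obtain ⟨r, hr, hrb⟩ := exists_between (show 1 < b by exact_mod_cast hb)
    obtain ⟨u, hle, -⟩ := h.exists_restrict_le_smul r hr
    filter_upwards [eventually_tail_map_mul_le hJ hnegJ hle (sub_pos.2 (NNReal.coe_lt_coe.2 hrb))]
      with x hx
    exact hx.trans_eq (by rw [sub_mul]; exact add_sub_cancel _ _)
  · obtain ⟨b', hb', hb'₁⟩ := exists_between (max_lt hb one_pos)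
    obtain ⟨hbb', hb'₀⟩ := max_lt_iff.1 hb'
    lift b' to ℝ≥0 using hb'₀.le
    obtain ⟨u, -, hle⟩ := h.exists_restrict_le_smul b'⁻¹
      ((one_lt_inv₀ (by exact_mod_cast hb'₀)).2 (by exact_mod_cast hb'₁))
    filter_upwards [eventually_tail_map_mul_le (by rwa [hsnd]) (by rwa [hsnd]) hle
      (sub_pos.2 ((div_lt_one hb'₀).2 hbb'))] with x hx
    change tail (μ.mconv ν) x ≤ _ at hx
    rw [← mul_le_mul_iff_right₀ (inv_pos.2 hb'₀), ← mul_assoc, inv_mul_eq_div]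
    rw [NNReal.coe_inv] at hx
    linarith

theorem IsAsymptoticProduct.memS_map_mul (h : IsAsymptoticProduct J μ ν) (hμ : MemS μ γ)
    (hγ : 0 ≤ γ) (hκ : IsReciprocalEndpoint J.snd κ) (hJ : ∀ᵐ y ∂J.snd, 0 ≤ y)
    (hneg : DilatedTailsNegligible J.snd (J.map fun p => p.1 * p.2)) :
    MemS (J.map fun p => p.1 * p.2) (γ * κ) := by
  obtain ⟨K, hJle⟩ := h.exists_le_smul
  obtain ⟨K', hνle⟩ := h.exists_le_smul_snd hμ.memL.tail_pos
  have hsnd : J.snd ≤ K • ν := snd_le_smul_of_le_smul_prod hJle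
  have hmap : J.map (fun p => p.1 * p.2) ≤ K • μ.mconv ν := map_mul_le_smul_mconv hJle
  have : IsProbabilityMeasure (J.map fun p => p.1 * p.2) :=
    Measure.isProbabilityMeasure_map (by fun_prop)
  have hν : ∀ᵐ y ∂ν, 0 ≤ y := (Measure.absolutelyContinuous_of_le_smul hνle).ae_le hJ
  have hκν : IsReciprocalEndpoint ν κ := hκ.of_le_smul hνle hsnd
  have hnegJ : DilatedTailsNegligible J.snd (μ.mconv ν) :=
    hneg.mono (isBigO_refl _ _) (isBigO_tail_of_le_smul hmap _)
  have hnegν : DilatedTailsNegligible ν (μ.mconv ν) :=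
    hnegJ.mono (isBigO_tail_of_le_smul hνle _) (isBigO_refl _ _)
  have hL : MemL (μ.mconv ν) (γ * κ) := hμ.memL.mconv hγ hν hκν hnegν
  have hequiv := h.isEquivalent_tail_map_mul hL.tail_pos hJ hν hnegJ hnegν
  have hint : Integrable (fun x => Real.exp (γ * κ * x)) (J.map fun p => p.1 * p.2) :=
    ((integrable_exp_mul_mconv hν hγ hκν hμ.integrable).smul_measure_nnreal).mono_measure hmap
  exact memS_of_hasSingleBigJump (hL.of_isEquivalent hequiv) hint
    ((hμ.hasSingleBigJump.mconv hμ.memL hν hnegν).mono hmap hequiv.isBigO_symm)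

end AsymptoticProduct

section SarmanovDensity

open scoped NNReal

lemma restrict_withDensity_ofReal_le_smul {α : Type*} [MeasurableSpace α] {ρ : Measure α}
    {s : Set α} (hs : MeasurableSet s) {F G : α → ℝ} {r : ℝ≥0} (hG : Measurable G)
    (h : ∀ᵐ p ∂ρ, p ∈ s → F p ≤ r * G p) :
    (ρ.withDensity fun p => ENNReal.ofReal (F p)).restrict s ≤
      r • ρ.withDensity fun p => ENNReal.ofReal (G p) := by
  have hsmul : (r • ρ.withDensity fun p => ENNReal.ofReal (G p)) =
      ρ.withDensity fun p => ENNReal.ofReal (r * G p) := by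
    rw [← Measure.coe_nnreal_smul, ← withDensity_smul _ hG.ennreal_ofReal]
    congr with p
    simp [ENNReal.ofReal_mul]
  calc _ = (ρ.restrict s).withDensity fun p => ENNReal.ofReal (F p) := restrict_withDensity hs _
    _ ≤ (ρ.restrict s).withDensity fun p => ENNReal.ofReal (r * G p) :=
      withDensity_mono ((ae_restrict_iff' hs).2 (h.mono fun p hp hps =>
        ENNReal.ofReal_le_ofReal (hp hps)))
    _ = (ρ.withDensity fun p => ENNReal.ofReal (r * G p)).restrict s :=
      (restrict_withDensity hs _).symm
    _ ≤ ρ.withDensity fun p => ENNReal.ofReal (r * G p) := Measure.restrict_le_self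
    _ = _ := hsmul.symm

section Boundedness

variable {α β : Type*} [MeasurableSpace α] {μ : Measure α} {f : α → ℝ} {g : β → ℝ} {s : Set α}
  {t : Set β}

lemma exists_mem_lt_zero_of_integral_eq_zero (hf : Integrable f μ) (h₀ : ∫ x, f x ∂μ = 0)
    (hne : ¬ f =ᵐ[μ] 0) (hs : ∀ᵐ x ∂μ, x ∈ s) : ∃ x ∈ s, f x < 0 := by
  contrapose! hne
  exact (integral_eq_zero_iff_of_nonneg_ae (hs.mono hne) hf).1 h₀

lemma exists_forall_abs_le_of_one_add_mul_nonneg (hf : Integrable f μ) (h₀ : ∫ x, f x ∂μ = 0)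
    (hne : ¬ f =ᵐ[μ] 0) (hs : ∀ᵐ x ∂μ, x ∈ s) (h : ∀ x ∈ s, ∀ y ∈ t, 0 ≤ 1 + f x * g y) :
    ∃ B, ∀ y ∈ t, |g y| ≤ B := by
  obtain ⟨x, hxs, hx⟩ := exists_mem_lt_zero_of_integral_eq_zero hf h₀ hne hs
  obtain ⟨x', hxs', hx'⟩ := exists_mem_lt_zero_of_integral_eq_zero hf.neg
    (by simp [integral_neg, h₀]) (fun h => hne (by simpa using h.neg)) hs
  rw [Pi.neg_apply, neg_lt_zero] at hx'
  refine ⟨max (-f x)⁻¹ (f x')⁻¹, fun y hy => abs_le.2 ⟨?_, le_max_of_le_left ?_⟩⟩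
  · refine neg_le.1 (le_max_of_le_right ?_)
    rw [← one_div, le_div_iff₀ hx']
    linarith [h x' hxs' y hy]
  · rw [← one_div, le_div_iff₀ (neg_pos.2 hx)]
    linarith [h x hxs y hy]

lemma exists_ae_abs_mul_le [MeasurableSpace β] {ν : Measure β} (hf : Integrable f μ)
    (hf₀ : ∫ x, f x ∂μ = 0) (hg : Integrable g ν) (hg₀ : ∫ y, g y ∂ν = 0)
    (hs : ∀ᵐ x ∂μ, x ∈ s) (ht : ∀ᵐ y ∂ν, y ∈ t)
    (h : ∀ x ∈ s, ∀ y ∈ t, 0 ≤ 1 + f x * g y) :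
    ∃ M, ∀ᵐ p ∂μ.prod ν, |f p.1 * g p.2| ≤ M := by
  by_cases hfne : f =ᵐ[μ] 0
  · refine ⟨0, ?_⟩
    filter_upwards [Measure.quasiMeasurePreserving_fst.ae hfne] with p hp
    simp [hp]
  by_cases hgne : g =ᵐ[ν] 0
  · refine ⟨0, ?_⟩
    filter_upwards [Measure.quasiMeasurePreserving_snd.ae hgne] with p hp
    simp [hp]
  obtain ⟨B, hB⟩ := exists_forall_abs_le_of_one_add_mul_nonneg hf hf₀ hfne hs h
  obtain ⟨C, hC⟩ := exists_forall_abs_le_of_one_add_mul_nonneg (t := s) (g := f) hg hg₀ hgne ht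
    fun y hy x hx => by rw [mul_comm]; exact h x hx y hy
  refine ⟨C * B, ?_⟩
  filter_upwards [Measure.quasiMeasurePreserving_fst.ae hs,
    Measure.quasiMeasurePreserving_snd.ae ht] with p hp₁ hp₂
  rw [abs_mul]
  exact mul_le_mul (hC _ hp₁) (hB _ hp₂) (abs_nonneg _) ((abs_nonneg _).trans (hC _ hp₁))

end Boundedness

variable {μ ν : Measure ℝ} {f g : ℝ → ℝ} {d c : ℝ} {s t : Set ℝ}

lemma limit_eq_zero_of_ae_eq_zero [IsFiniteMeasure μ] (hμ : ∀ x, 0 < tail μ x) (hf : f =ᵐ[μ] 0)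
    (hlim : Tendsto f atTop (nhds d)) : d = 0 := by
  by_contra hd
  obtain ⟨N, hN⟩ := eventually_atTop.1 (hlim.eventually_ne hd)
  refine (hμ N).ne' (measureReal_eq_zero_iff (by finiteness) |>.2
    (measure_mono_null (fun x hx => ?_) (ae_iff.1 hf)))
  exact hN x (le_of_lt hx)

lemma exists_ae_abs_sub_mul_le [IsFiniteMeasure μ] (hμ : ∀ x, 0 < tail μ x)
    (hlim : Tendsto f atTop (nhds d)) (hf : Integrable f μ) (hf₀ : ∫ x, f x ∂μ = 0)
    (hs : ∀ᵐ x ∂μ, x ∈ s) (ht : ∀ᵐ y ∂ν, y ∈ t)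
    (h : ∀ x ∈ s, ∀ y ∈ t, 0 ≤ 1 + f x * g y) {η : ℝ} (hη : 0 < η) :
    ∃ u, ∀ᵐ p ∂μ.prod ν, u ≤ p.1 → |(f p.1 - d) * g p.2| ≤ η := by
  by_cases hfne : f =ᵐ[μ] 0
  · refine ⟨0, ?_⟩
    filter_upwards [Measure.quasiMeasurePreserving_fst.ae hfne] with p hp _
    simp [hp, limit_eq_zero_of_ae_eq_zero hμ hfne hlim, hη.le]
  obtain ⟨B, hB⟩ := exists_forall_abs_le_of_one_add_mul_nonneg hf hf₀ hfne hs h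
  have hsub : Tendsto (fun x => |f x - d| * B) atTop (nhds 0) := by
    simpa using ((hlim.sub_const d).abs.mul_const B)
  obtain ⟨u, hu⟩ := eventually_atTop.1 (hsub.eventually_le_const hη)
  refine ⟨u, ?_⟩
  filter_upwards [Measure.quasiMeasurePreserving_snd.ae ht] with p hp hup
  rw [abs_mul]
  exact (mul_le_mul_of_nonneg_left (hB _ hp) (abs_nonneg _)).trans (hu _ hup)

lemma isProbabilityMeasure_withDensity_one_add [IsProbabilityMeasure ν]
    (hg : Integrable g ν) (hg₀ : ∫ y, g y ∂ν = 0) (hd : ∀ᵐ y ∂ν, 0 ≤ 1 + d * g y) :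
    IsProbabilityMeasure (ν.withDensity fun y => ENNReal.ofReal (1 + d * g y)) := by
  have hint : Integrable (fun y => 1 + d * g y) ν := (integrable_const 1).add (hg.const_mul d)
  constructor
  rw [withDensity_apply _ .univ, Measure.restrict_univ,
    ← ofReal_integral_eq_lintegral_ofReal hint hd,
    integral_add (integrable_const 1) (hg.const_mul d), integral_const_mul, hg₀]
  simp

lemma le_mul_and_le_mul_of_abs_sub_le {a b r : ℝ} (hr : 1 ≤ r) (hb : 0 ≤ b)
    (h : |a - b| ≤ (1 - r⁻¹) * b) : a ≤ r * b ∧ b ≤ r * a := by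
  have hr₀ : 0 < r := one_pos.trans_le hr
  obtain ⟨hlower, hupper⟩ := abs_le.1 h
  have hr₂ : 2 - r⁻¹ ≤ r := by
    have : r * r⁻¹ = 1 := mul_inv_cancel₀ hr₀.ne'
    nlinarith
  constructor
  · calc a ≤ (2 - r⁻¹) * b := by linarith
      _ ≤ r * b := mul_le_mul_of_nonneg_right hr₂ hb
  · rw [← inv_mul_le_iff₀ hr₀]
    linarith

theorem isAsymptoticProduct_withDensity [IsFiniteMeasure μ] [SFinite ν]
    (hfm : Measurable f) (hgm : Measurable g) (hμ : ∀ x, 0 < tail μ x)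
    (hlim : Tendsto f atTop (nhds d)) (hf : Integrable f μ) (hf₀ : ∫ x, f x ∂μ = 0)
    (hg : Integrable g ν) (hg₀ : ∫ y, g y ∂ν = 0) (hs : ∀ᵐ x ∂μ, x ∈ s) (ht : ∀ᵐ y ∂ν, y ∈ t)
    (h : ∀ x ∈ s, ∀ y ∈ t, 0 ≤ 1 + f x * g y)
    (hc : 0 < c) (hcd : ∀ᵐ y ∂ν, c ≤ 1 + d * g y) :
    IsAsymptoticProduct ((μ.prod ν).withDensity fun p => ENNReal.ofReal (1 + f p.1 * g p.2)) μ
      (ν.withDensity fun y => ENNReal.ofReal (1 + d * g y)) := by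
  have hprod : μ.prod (ν.withDensity fun y => ENNReal.ofReal (1 + d * g y)) =
      (μ.prod ν).withDensity fun p => ENNReal.ofReal (1 + d * g p.2) :=
    prod_withDensity_right (by fun_prop)
  have hcd' := (Measure.quasiMeasurePreserving_snd (μ := μ)).ae hcd
  constructor
  · obtain ⟨M, hM⟩ := exists_ae_abs_mul_le hf hf₀ hg hg₀ hs ht h
    refine ⟨Real.toNNReal ((1 + M) / c), ?_⟩
    rw [hprod, ← Measure.restrict_univ (μ := Measure.withDensity _ _)]
    refine restrict_withDensity_ofReal_le_smul .univ (by fun_prop) ?_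
    filter_upwards [hM, hcd'] with p hp hcp _
    calc 1 + f p.1 * g p.2 ≤ 1 + M := by linarith [le_abs_self (f p.1 * g p.2)]
      _ = (1 + M) / c * c := (div_mul_cancel₀ _ hc.ne').symm
      _ ≤ Real.toNNReal ((1 + M) / c) * (1 + d * g p.2) := by
        gcongr
        exact Real.le_coe_toNNReal _
  · intro r hr
    have hr₁ : (1 : ℝ) < r := by exact_mod_cast hr
    have hη : 0 < 1 - (r : ℝ)⁻¹ := sub_pos.2 (inv_lt_one_of_one_lt₀ hr₁)
    obtain ⟨u, hu⟩ := exists_ae_abs_sub_mul_le hμ hlim hf hf₀ hs ht h (mul_pos hη hc)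
    have hmeas : MeasurableSet {p : ℝ × ℝ | u ≤ p.1} := measurableSet_le (by fun_prop) (by fun_prop)
    have hclose : ∀ᵐ p ∂μ.prod ν, u ≤ p.1 → 1 + f p.1 * g p.2 ≤ r * (1 + d * g p.2) ∧
        1 + d * g p.2 ≤ r * (1 + f p.1 * g p.2) := by
      filter_upwards [hu, hcd'] with p hp hcp hup
      refine le_mul_and_le_mul_of_abs_sub_le hr₁.le (hc.le.trans hcp) ?_
      rw [add_sub_add_left_eq_sub, ← sub_mul]
      exact (hp hup).trans (mul_le_mul_of_nonneg_left hcp hη.le)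
    rw [hprod]
    exact ⟨u, restrict_withDensity_ofReal_le_smul hmeas (by fun_prop)
      (hclose.mono fun p hp hup => (hp hup).1), restrict_withDensity_ofReal_le_smul hmeas
      (by fun_prop) (hclose.mono fun p hp hup => (hp hup).2)⟩

end SarmanovDensity

section LebesgueDifferentiation

lemma countable_setOf_measure_singleton_ne_zero (ν : Measure ℝ) [SFinite ν] :
    {y | ν {y} ≠ 0}.Countable := by
  simpa only [pos_iff_ne_zero, id, ofPred_eq_eq_singleton] using
    Measure.countable_meas_level_set_pos (μ := ν) measurable_id

lemma frequently_measure_singleton_sub_eq_zero (ν : Measure ℝ) [SFinite ν] (y : ℝ) :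
    ∃ᶠ δ in nhdsWithin 0 (Ioi 0), ν {y - δ} = 0 := by
  intro h
  obtain ⟨e, he, hsub⟩ := (mem_nhdsGT_iff_exists_Ioo_subset).1 h
  refine (Cardinal.Real.Ioo_countable_iff.1 ?_).not_gt he
  exact ((countable_setOf_measure_singleton_ne_zero ν).preimage sub_right_injective).mono hsub

/- Lebesgue differentiation controls averages over closed balls, which agree with averages over
the half-open intervals whenever the left endpoint is not an atom. -/
lemma ae_eq_of_tendsto_setIntegral_Ioc_div {ν : Measure ℝ} [IsFiniteMeasure ν] {g ψ : ℝ → ℝ}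
    (hg : Integrable g ν)
    (hψ : ∀ y ∈ ν.support, Tendsto (fun δ => (∫ v in Ioc (y - δ) (y + δ), g v ∂ν) /
      ν.real (Ioc (y - δ) (y + δ))) (nhdsWithin 0 (Ioi 0)) (nhds (ψ y))) : ψ =ᵐ[ν] g := by
  filter_upwards [(Besicovitch.vitaliFamily ν).ae_tendsto_average hg.locallyIntegrable,
    Measure.support_mem_ae] with y hy hsupp
  refine tendsto_nhds_unique_of_frequently_eq (hψ y hsupp)
    (hy.comp (Besicovitch.tendsto_filterAt ν y)) ?_
  refine (frequently_measure_singleton_sub_eq_zero ν y).mono fun δ hδ => ?_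
  have hIoc := Ioc_ae_eq_Icc' (b := y + δ) hδ
  rw [Function.comp_apply, Real.closedBall_eq_Icc, setAverage_eq, setIntegral_congr_set hIoc,
    measureReal_congr hIoc, smul_eq_mul, div_eq_inv_mul]

end LebesgueDifferentiation

section ReciprocalEndpoint

variable {ν : Measure ℝ} [IsProbabilityMeasure ν]

lemma isReciprocalEndpoint_zero (h : ¬ BddAbove {y | 0 < tail ν y}) :
    IsReciprocalEndpoint ν 0 where
  nonneg := le_rfl
  mul_le_one := by simp
  tail_pos y _ _ := by
    obtain ⟨z, hz, hyz⟩ := not_bddAbove_iff.1 h y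
    exact hz.trans_le (tail_antitone hyz.le)

lemma isReciprocalEndpoint_inv_csSup (h : BddAbove {y | 0 < tail ν y}) (h₀ : 0 < tail ν 0) :
    IsReciprocalEndpoint ν (sSup {y | 0 < tail ν y})⁻¹ := by
  set β := sSup {y | 0 < tail ν y}
  have hβ : 0 < β := by
    obtain ⟨y, hy, hpos⟩ := exists_gt_tail_pos h₀
    exact hy.trans_le (le_csSup h hpos)
  have htail : tail ν β = 0 := by
    by_contra hne
    obtain ⟨y, hy, hpos⟩ := exists_gt_tail_pos (measureReal_nonneg.lt_of_ne' hne)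
    exact hy.not_ge (le_csSup h hpos)
  refine ⟨inv_nonneg.2 hβ.le, ?_, fun y _ hy => ?_⟩
  · filter_upwards [measure_eq_zero_iff_ae_notMem.1 ((measureReal_eq_zero_iff).1 htail)] with y hy
    exact inv_mul_le_one_of_le₀ (not_lt.1 hy) hβ.le
  · rw [inv_mul_lt_one₀ hβ] at hy
    obtain ⟨z, hz, hyz⟩ := exists_lt_of_lt_csSup ⟨0, h₀⟩ hy
    exact hz.trans_le (tail_antitone hyz.le)

end ReciprocalEndpoint

section RandomVariables

variable {Ω : Type*} [MeasureSpace Ω] {X Y Z : Ω → ℝ} {φ ψ : ℝ → ℝ} {γ a : ℝ}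

lemma rvTail_eq_tail_map (hZ : Measurable Z) : rvTail Z = tail (Measure.map Z ℙ) :=
  funext fun _ => (map_measureReal_apply hZ measurableSet_Ioi).symm

lemma distSupport_eq_support_map (hZ : Measurable Z) :
    distSupport Z = (Measure.map Z ℙ).support := by
  ext y
  rw [(nhds_basis_Ioo_pos y).mem_measureSupport]
  simp only [Measure.map_apply hZ measurableSet_Ioo]
  rfl

lemma gammaOverBeta_eq_mul (Z : Ω → ℝ) (γ : ℝ) : gammaOverBeta Z γ = γ * gammaOverBeta Z 1 := by
  unfold gammaOverBeta
  split_ifs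
  · exact (mul_one_div _ _).symm
  · exact (mul_zero _).symm

lemma Assumption2.dilatedTailsNegligible (h : Assumption2 X Y) (hX : Measurable X)
    (hY : Measurable Y) : DilatedTailsNegligible (Measure.map Y ℙ)
      (Measure.map (fun ω => X ω * Y ω) ℙ) := by
  rw [DilatedTailsNegligible, ← rvTail_eq_tail_map hY, ← rvTail_eq_tail_map (by fun_prop)]
  exact h

variable [IsProbabilityMeasure (ℙ : Measure Ω)]

lemma rvCdf_eq_cdf_map (hZ : Measurable Z) (x : ℝ) : rvCdf Z x = cdf (Measure.map Z ℙ) x := by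
  have := Measure.isProbabilityMeasure_map (μ := ℙ) hZ.aemeasurable
  rw [cdf_eq_real]
  exact (map_measureReal_apply hZ measurableSet_Iic).symm

lemma memSGamma_iff_memS_map (hZ : Measurable Z) : MemSGamma Z γ ↔ MemS (Measure.map Z ℙ) γ := by
  have := Measure.isProbabilityMeasure_map (μ := ℙ) hZ.aemeasurable
  have hconv : convSqTail Z = tail ((Measure.map Z ℙ).conv (Measure.map Z ℙ)) := rfl
  rw [MemSGamma, MemLGamma, UnboundedDist, rvTail_eq_tail_map hZ, hconv]
  refine ⟨fun ⟨⟨hpos, hL⟩, hint, hS⟩ => ⟨⟨fun x => ?_, hL⟩, hint, hS⟩,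
    fun h => ⟨⟨fun x _ => h.memL.tail_pos x, h.memL.isEquivalent⟩, h.integrable, h.isEquivalent⟩⟩
  exact (hpos (max x 1) (by positivity)).trans_le (tail_antitone (le_max_left _ _))

lemma isReciprocalEndpoint_gammaOverBeta_one (hY : Measurable Y) (hY₀ : ∀ ω, 0 ≤ Y ω)
    (hYnd : ℙ {ω | Y ω = 0} ≠ 1) :
    IsReciprocalEndpoint (Measure.map Y ℙ) (gammaOverBeta Y 1) := by
  have := Measure.isProbabilityMeasure_map (μ := ℙ) hY.aemeasurable
  have h₀ : 0 < tail (Measure.map Y ℙ) 0 := by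
    refine measureReal_nonneg.lt_of_ne' fun h => hYnd ?_
    rw [map_measureReal_apply hY measurableSet_Ioi, measureReal_eq_zero_iff] at h
    refine (prob_compl_eq_zero_iff (hY (measurableSet_singleton 0))).1 ?_
    exact measure_mono_null (fun ω hω => (hY₀ ω).lt_of_ne' hω) h
  rw [gammaOverBeta, rvTail_eq_tail_map hY, one_div]
  split_ifs with hbdd
  · exact isReciprocalEndpoint_inv_csSup hbdd h₀
  · exact isReciprocalEndpoint_zero hbdd

lemma SarmanovPsi.ae_eq (h : SarmanovPsi Y φ ψ) (hY : Measurable Y)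
    (hφ : Integrable φ (Measure.map Y ℙ)) : ψ =ᵐ[Measure.map Y ℙ] φ := by
  have := Measure.isProbabilityMeasure_map (μ := ℙ) hY.aemeasurable
  refine ae_eq_of_tendsto_setIntegral_Ioc_div hφ fun y hy => ?_
  refine (h y (distSupport_eq_support_map hY ▸ hy)).congr' ?_
  filter_upwards [self_mem_nhdsWithin] with δ hδ
  rw [measureReal_Ioc_eq_cdf_sub (by linarith [mem_Ioi.1 hδ]), rvCdf_eq_cdf_map hY,
    rvCdf_eq_cdf_map hY]

lemma ae_map_le_one_add_mul_of_sarmanovPsi {c : ℝ} (hψ : SarmanovPsi Y φ ψ) (hY : Measurable Y)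
    (hφm : Measurable φ) (hφ : Integrable φ (Measure.map Y ℙ))
    (h : ℙ {ω | c ≤ 1 + a * ψ (Y ω)} = 1) : ∀ᵐ y ∂Measure.map Y ℙ, c ≤ 1 + a * φ y := by
  rw [ae_map_iff hY.aemeasurable (measurableSet_le (by fun_prop) (by fun_prop))]
  refine (mem_ae_iff_prob_eq_one (measurableSet_le (by fun_prop) (by fun_prop))).2 ?_
  rw [← h]
  refine measure_congr ?_
  filter_upwards [ae_of_ae_map hY.aemeasurable (hψ.ae_eq hY hφ)] with ω hω
  exact congrArg (fun t => c ≤ 1 + a * t) hω.symm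

lemma Sarmanov.exists_isAsymptoticProduct {φ₁ φ₂ : ℝ → ℝ} {θ c d : ℝ}
    (h : Sarmanov X Y φ₁ φ₂ θ) (hX : Measurable X) (hY : Measurable Y)
    (hY₀ : ∀ᵐ y ∂Measure.map Y ℙ, 0 ≤ y) (hpos : ∀ x, 0 < tail (Measure.map X ℙ) x)
    (hlim : Tendsto φ₁ atTop (nhds d)) (hc : 0 < c)
    (hcd : ∀ᵐ y ∂Measure.map Y ℙ, c ≤ 1 + θ * d * φ₂ y) :
    ∃ ν : Measure ℝ, IsProbabilityMeasure ν ∧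
      IsAsymptoticProduct (Measure.map (fun ω => (X ω, Y ω)) ℙ) (Measure.map X ℙ) ν := by
  obtain ⟨hφ₁, hφ₂, hint₁, hint₂, hmean₁, hmean₂, hnonneg, hjoint⟩ := h
  have := Measure.isProbabilityMeasure_map (μ := ℙ) hX.aemeasurable
  have := Measure.isProbabilityMeasure_map (μ := ℙ) hY.aemeasurable
  have hassoc (x y : ℝ) : θ * x * y = x * (θ * y) := by ring
  simp only [hassoc] at hcd hnonneg hjoint
  have hmeanX : ∫ x, φ₁ x ∂Measure.map X ℙ = 0 :=
    (integral_map hX.aemeasurable hφ₁.aestronglyMeasurable).trans hmean₁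
  have hmeanY : ∫ y, θ * φ₂ y ∂Measure.map Y ℙ = 0 := by
    rw [integral_const_mul, integral_map hY.aemeasurable hφ₂.aestronglyMeasurable, hmean₂, mul_zero]
  have hintX := (integrable_map_measure hφ₁.aestronglyMeasurable hX.aemeasurable).2 hint₁
  have hintY := (integrable_map_measure hφ₂.aestronglyMeasurable hY.aemeasurable).2 hint₂
  rw [hjoint]
  exact ⟨_, isProbabilityMeasure_withDensity_one_add (hintY.const_mul θ) hmeanY
      (hcd.mono fun y hy => hc.le.trans hy),
    isAsymptoticProduct_withDensity (f := φ₁) (g := fun y => θ * φ₂ y) (s := univ) (t := Ici 0)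
      hφ₁ (hφ₂.const_mul θ) hpos hlim hintX hmeanX (hintY.const_mul θ) hmeanY
      (.of_forall mem_univ) hY₀ (fun x _ y hy => hnonneg x y hy) hc hcd⟩

theorem product_memS_of_sarmanov_general (hX : Measurable X) (hY : Measurable Y)
    (hY₀ : ∀ ω, 0 ≤ Y ω) (hYnd : ℙ {ω | Y ω = 0} ≠ 1) {φ₁ φ₂ ψ : ℝ → ℝ} {θ c d : ℝ}
    (hSar : Sarmanov X Y φ₁ φ₂ θ) (hc : 0 < c) (hψ : SarmanovPsi Y φ₂ ψ)
    (hφ₁ : Tendsto φ₁ atTop (nhds d)) (has : ℙ {ω | c ≤ 1 + θ * d * ψ (Y ω)} = 1)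
    (hA2 : Assumption2 X Y) (hγ : 0 ≤ γ) (hFS : MemSGamma X γ) :
    MemSGamma (fun ω => X ω * Y ω) (gammaOverBeta Y γ) := by
  have hXY : Measurable fun ω => X ω * Y ω := hX.mul hY
  have := Measure.isProbabilityMeasure_map (μ := ℙ) hX.aemeasurable
  have := Measure.isProbabilityMeasure_map (μ := ℙ) (hX.prodMk hY).aemeasurable
  have hsnd : (Measure.map (fun ω => (X ω, Y ω)) ℙ).snd = Measure.map Y ℙ :=
    Measure.snd_map_prodMk hX
  have hmap : (Measure.map (fun ω => (X ω, Y ω)) ℙ).map (fun p => p.1 * p.2) =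
      Measure.map (fun ω => X ω * Y ω) ℙ := Measure.map_map (by fun_prop) (hX.prodMk hY)
  have hF := (memSGamma_iff_memS_map hX).1 hFS
  have hY₀' : ∀ᵐ y ∂Measure.map Y ℙ, 0 ≤ y :=
    (ae_map_iff hY.aemeasurable measurableSet_Ici).2 (.of_forall hY₀)
  have hφ₂ : Integrable φ₂ (Measure.map Y ℙ) :=
    (integrable_map_measure hSar.2.1.aestronglyMeasurable hY.aemeasurable).2 hSar.2.2.2.1
  obtain ⟨ν, _, hν⟩ := hSar.exists_isAsymptoticProduct hX hY hY₀' hF.memL.tail_pos hφ₁ hc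
    (ae_map_le_one_add_mul_of_sarmanovPsi hψ hY hSar.2.1 hφ₂ has)
  rw [memSGamma_iff_memS_map hXY, gammaOverBeta_eq_mul, ← hmap]
  refine hν.memS_map_mul hF hγ ?_ ?_ ?_ <;> rw [hsnd]
  · exact isReciprocalEndpoint_gammaOverBeta_one hY hY₀ hYnd
  · exact hY₀'
  · exact hmap ▸ hA2.dilatedTailsNegligible hX hY

end RandomVariables

theorem product_memS_of_sarmanov {Ω : Type*} [MeasureSpace Ω] [IsProbabilityMeasure (ℙ : Measure Ω)]
    (X Y : Ω → ℝ) (hXm : Measurable X) (hYm : Measurable Y)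
    (hYnonneg : ∀ ω, 0 ≤ Y ω)
    (hFunb : UnboundedDist X)
    (hXnd : ℙ {ω | X ω = 0} ≠ 1) (hYnd : ℙ {ω | Y ω = 0} ≠ 1)
    (φ₁ φ₂ ψ : ℝ → ℝ) (θ c d₁ : ℝ)
    (hSar : Sarmanov X Y φ₁ φ₂ θ)
    (hc : 0 < c) (hd₁ : 0 < d₁) (hψm : Measurable ψ)
    (hψ : SarmanovPsi Y φ₂ ψ)
    (hφ₁ : Filter.Tendsto φ₁ atTop (nhds d₁))
    (has : ℙ {ω | c ≤ 1 + θ * d₁ * ψ (Y ω)} = 1)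
    (hA2 : Assumption2 X Y)
    (γ : ℝ) (hγ : 0 ≤ γ) (hFS : MemSGamma X γ) :
    MemSGamma (fun ω => X ω * Y ω) (gammaOverBeta Y γ) :=
  product_memS_of_sarmanov_general hXm hYm hYnonneg hYnd hSar hc hψ hφ₁ has hA2 hγ hFS
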